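/- arXiv:1002.1552 — 4 statements merged into one kernel-verified Lean document; each statement's English description precedes it below -/
import Mathlib

section
/- There exist absolute constants C₁, C₂ > 0 such that the following holds. Let G be an abelian group, let A ⊆ G be a finite set with |A| ≥ 2, let K ≥ 1 be a real number with |A + A| ≤ K|A|, and let η ∈ (0,1]. Then there is a finite set L ⊆ G such that |A ∩ Span(L)| ≥ K^{−C₁·exp(C₁/η)}·|A| and |L| ≤ C₂·K^{η}·log|A|. -/
open Pointwise

/-- The span of a finite set `L`: all sums `∑_{x ∈ L} σ_x • x` with `σ_x ∈ {-1,0,1}`. -/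
def Span {G : Type*} [AddCommGroup G] (L : Finset G) : Set G :=
  {y | ∃ σ : G → ℤ, (∀ x, σ x = -1 ∨ σ x = 0 ∨ σ x = 1) ∧ y = ∑ x ∈ L, σ x • x}

/-!
If every element of a dissociated set `D` translates `S` onto a proportion `1 / ρ` of itself, then
`#D ≤ 5 * ρ ^ 2 * log #S`: multiply the indicator function of `S` by a Riesz product over `D`.
Dissociativity bounds the result pointwise, whereas each factor of the product increases the sum
over `S` of the logarithms, as translation by `±l` inside `S` is a symmetric random walk and `log`
is concave. A maximal dissociated subset of a set spans it, so a set of almost periods of `S` lies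
in the span of `O(ρ ^ 2 * log #S)` elements.

It remains to find a large subset of `A` consisting of almost periods, up to translation, with
`ρ = K ^ (η / 2)`. Starting from `B = A`, replace `B` by `B ∩ (s +ᵥ B)` as long as some popular
difference `s` of `B` makes `#(A + B)` drop by a factor `ρ`. As `#A ≤ #(A + B) ≤ K * #A`, this stops
after at most `2 / η` steps, each of which squares the density of `B`: hence the double exponential.
When it stops, every popular difference `s` of `B` is an almost period of `A + B`, since
`A + (B ∩ (s +ᵥ B)) ⊆ (A + B) ∩ (s +ᵥ (A + B))`, and some `b ∈ B` has popular differences `x - b`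
with at least half of the elements `x` of `B`.
-/

open Finset

section Log

variable {ι : Type*} {S : Finset ι}

lemma one_sub_mul_log_add_le {d y : ℝ} (hd : d < 1) (hy : 0 < y) :
    (1 - d) * (Real.log y + d + 1) ≤ y := by
  calc (1 - d) * (Real.log y + d + 1)
      ≤ (1 - d) * Real.exp (Real.log y + d) :=
        mul_le_mul_of_nonneg_left (Real.add_one_le_exp _) (sub_nonneg.2 hd.le)
    _ ≤ Real.exp (-d) * Real.exp (Real.log y + d) := by gcongr; exact Real.one_sub_le_exp_neg d
    _ = y := by rw [← Real.exp_add, neg_add_eq_sub, add_sub_cancel_right, Real.exp_log hy]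

/-- Jensen's inequality for `log`, the weights being `w t` for `t ∈ S` and `1 - ∑ w t`. -/
lemma le_log_add_sum_mul {w u : ι → ℝ} {v : ℝ} (hw : ∀ t ∈ S, 0 ≤ w t) (hw' : ∑ t ∈ S, w t < 1)
    (hu : ∀ t ∈ S, 0 < u t) (hv : 0 < v) :
    (1 - ∑ t ∈ S, w t) * (Real.log v + ∑ t ∈ S, w t) + ∑ t ∈ S, w t * Real.log (u t) ≤
      Real.log (v + ∑ t ∈ S, w t * u t) := by
  set d := ∑ t ∈ S, w t
  set c := v + ∑ t ∈ S, w t * u t with hc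
  have hc₀ : 0 < c := add_pos_of_pos_of_nonneg hv <|
    sum_nonneg fun t ht ↦ mul_nonneg (hw t ht) (hu t ht).le
  have hlog_u : ∑ t ∈ S, w t * Real.log (u t) ≤ d * (Real.log c - 1) + (c - v) / c := by
    calc ∑ t ∈ S, w t * Real.log (u t)
        ≤ ∑ t ∈ S, w t * (Real.log c - 1 + u t / c) := by
          refine sum_le_sum fun t ht ↦ mul_le_mul_of_nonneg_left ?_ (hw t ht)
          have := Real.log_le_sub_one_of_pos (div_pos (hu t ht) hc₀)
          rw [Real.log_div (hu t ht).ne' hc₀.ne'] at this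
          linarith
      _ = d * (Real.log c - 1) + (c - v) / c := by
          simp_rw [mul_add, sum_add_distrib, ← sum_mul, ← mul_div_assoc, ← sum_div]
          rw [hc, add_sub_cancel_left]
  have hlog_v := one_sub_mul_log_add_le hw' (div_pos hv hc₀)
  rw [Real.log_div hv.ne' hc₀.ne'] at hlog_v
  have : (c - v) / c = 1 - v / c := by rw [sub_div, div_self hc₀.ne']
  linarith

lemma sum_log_add_le_sum_log_add_sum_mul {w : ι → ι → ℝ} {u : ι → ℝ} {δ : ℝ}
    (hw : ∀ s ∈ S, ∀ t ∈ S, 0 ≤ w s t) (hsymm : ∀ s t, w s t = w t s)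
    (hδ : ∀ s ∈ S, ∑ t ∈ S, w s t ≤ δ) (hδ₁ : δ < 1) (hu : ∀ s ∈ S, 0 < u s) :
    ∑ s ∈ S, Real.log (u s) + (1 - δ) * ∑ s ∈ S, ∑ t ∈ S, w s t ≤
      ∑ s ∈ S, Real.log (u s + ∑ t ∈ S, w s t * u t) := by
  have hcancel : ∑ s ∈ S, ∑ t ∈ S, w s t * Real.log (u t) =
      ∑ s ∈ S, (∑ t ∈ S, w s t) * Real.log (u s) := by
    rw [sum_comm]
    simp_rw [sum_mul, hsymm]
  calc ∑ s ∈ S, Real.log (u s) + (1 - δ) * ∑ s ∈ S, ∑ t ∈ S, w s t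
      ≤ ∑ s ∈ S, Real.log (u s) + ∑ s ∈ S, (1 - ∑ t ∈ S, w s t) * ∑ t ∈ S, w s t := by
        rw [mul_sum]
        gcongr with s hs
        · exact sum_nonneg (hw s hs)
        · exact hδ s hs
    _ = ∑ s ∈ S, ((1 - ∑ t ∈ S, w s t) * (Real.log (u s) + ∑ t ∈ S, w s t) +
          ∑ t ∈ S, w s t * Real.log (u t)) := by
        rw [sum_add_distrib, hcancel, ← sum_add_distrib, ← sum_add_distrib]
        exact sum_congr rfl fun s _ ↦ by ring
    _ ≤ _ := sum_le_sum fun s hs ↦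
        le_log_add_sum_mul (hw s hs) ((hδ s hs).trans_lt hδ₁) hu (hu s hs)

end Log

section RieszSum

variable {G : Type*} [AddCommGroup G] [DecidableEq G] {S D : Finset G} {a : ℝ} {l x : G}

lemma inter_vadd_eq_filter (S : Finset G) (l : G) : S ∩ (l +ᵥ S) = {s ∈ S | s - l ∈ S} := by
  ext s
  simp [← neg_vadd_mem_iff, neg_add_eq_sub]

/-- Translation by `±l` inside `S` is a symmetric random walk. -/
lemma sum_log_add_card_inter_vadd_le {u : G → ℝ} (ha : 0 ≤ a) (ha' : a < 1 / 2)
    (hu : ∀ s ∈ S, 0 < u s) (hu' : ∀ s, 0 ≤ u s) (l : G) :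
    ∑ s ∈ S, Real.log (u s) + 2 * a * (1 - 2 * a) * #(S ∩ (l +ᵥ S)) ≤
      ∑ s ∈ S, Real.log (u s + a * (u (s + l) + u (s - l))) := by
  let w (s t : G) : ℝ := a * ((if t = s + l then 1 else 0) + if t = s - l then 1 else 0)
  have hw_sum (v : G → ℝ) (s : G) : ∑ t ∈ S, w s t * v t =
      a * ((if s + l ∈ S then v (s + l) else 0) + if s - l ∈ S then v (s - l) else 0) := by
    simp [w, mul_assoc, add_mul, ← mul_sum, sum_add_distrib]
  have hw_total : ∑ s ∈ S, ∑ t ∈ S, w s t = 2 * a * #(S ∩ (l +ᵥ S)) := by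
    simp only [w, ← mul_sum, sum_add_distrib]
    rw [sum_comm (f := fun s t ↦ if t = s + l then (1 : ℝ) else 0), inter_vadd_eq_filter,
      card_filter]
    simp only [← sub_eq_iff_eq_add, sum_ite_eq, sum_ite_eq', Nat.cast_sum, Nat.cast_ite,
      Nat.cast_one, Nat.cast_zero]
    ring
  have hjensen := sum_log_add_le_sum_log_add_sum_mul (w := w) (δ := 2 * a)
    (fun s _ t _ ↦ by positivity)
    (fun s t ↦ by simp only [w, eq_sub_iff_add_eq, @eq_comm _ _ (_ + _), add_comm])
    (fun s _ ↦ by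
      have := hw_sum 1 s
      simp only [Pi.one_apply, mul_one] at this
      rw [this, mul_comm 2 a]
      gcongr
      split_ifs <;> norm_num) (by linarith) hu
  calc ∑ s ∈ S, Real.log (u s) + 2 * a * (1 - 2 * a) * #(S ∩ (l +ᵥ S))
      ≤ ∑ s ∈ S, Real.log (u s + ∑ t ∈ S, w s t * u t) := by
        rw [hw_total] at hjensen
        linarith
    _ ≤ _ := sum_le_sum fun s hs ↦ by
        have := hu s hs
        have hadd := hu' (s + l)
        have hsub := hu' (s - l)
        rw [hw_sum]
        refine Real.log_le_log (by split_ifs <;> positivity) ?_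
        gcongr <;> split_ifs <;> simp [*]

/-- The value at `x` of the convolution of the indicator function of `S` with the Riesz product
`∏_{l ∈ D} (1 + a δ_l) * (1 + a δ_{-l})`, written out as a sum over the pairs `t`, `u` of sets of
the `l` for which `a δ_l`, respectively `a δ_{-l}`, is chosen when expanding the product. -/
def rieszSum (a : ℝ) (S D : Finset G) (x : G) : ℝ :=
  ∑ t ∈ D.powerset, ∑ u ∈ D.powerset,
    if x + ∑ y ∈ t, y - ∑ y ∈ u, y ∈ S then a ^ #t * a ^ #u else 0

lemma rieszSum_nonneg (ha : 0 ≤ a) (S D : Finset G) (x : G) : 0 ≤ rieszSum a S D x :=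
  sum_nonneg fun _ _ ↦ sum_nonneg fun _ _ ↦ by split_ifs <;> positivity

@[simp] lemma rieszSum_empty (a : ℝ) (S : Finset G) (x : G) :
    rieszSum a S ∅ x = if x ∈ S then 1 else 0 := by
  simp [rieszSum]

lemma rieszSum_insert (a : ℝ) (S : Finset G) (hl : l ∉ D) (x : G) :
    rieszSum a S (insert l D) x =
      (1 + a ^ 2) * rieszSum a S D x + a * (rieszSum a S D (x + l) + rieszSum a S D (x - l)) := by
  simp only [rieszSum, sum_powerset_insert hl, mul_sum, ← sum_add_distrib]
  refine sum_congr rfl fun t ht ↦ sum_congr rfl fun u hu ↦ ?_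
  have hlt : l ∉ t := fun h ↦ hl (mem_powerset.1 ht h)
  have hlu : l ∉ u := fun h ↦ hl (mem_powerset.1 hu h)
  simp only [sum_insert hlt, sum_insert hlu, card_insert_of_notMem hlt, card_insert_of_notMem hlu]
  rw [show x + (l + ∑ y ∈ t, y) - (l + ∑ y ∈ u, y) = x + ∑ y ∈ t, y - ∑ y ∈ u, y by abel,
    show x + (l + ∑ y ∈ t, y) - ∑ y ∈ u, y = x + l + ∑ y ∈ t, y - ∑ y ∈ u, y by abel,
    show x + ∑ y ∈ t, y - (l + ∑ y ∈ u, y) = x - l + ∑ y ∈ t, y - ∑ y ∈ u, y by abel]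
  split_ifs <;> ring

lemma le_rieszSum_insert (ha : 0 ≤ a) (S : Finset G) (hl : l ∉ D) (x : G) :
    rieszSum a S D x + a * (rieszSum a S D (x + l) + rieszSum a S D (x - l)) ≤
      rieszSum a S (insert l D) x := by
  rw [rieszSum_insert a S hl]
  nlinarith [rieszSum_nonneg ha S D x, sq_nonneg a]

lemma rieszSum_pos (ha : 0 ≤ a) (D : Finset G) (hx : x ∈ S) : 0 < rieszSum a S D x := by
  induction D using Finset.induction_on with
  | empty => simp [hx]
  | insert l D hl ih =>
    have hadd := rieszSum_nonneg ha S D (x + l)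
    have hsub := rieszSum_nonneg ha S D (x - l)
    exact lt_of_lt_of_le (by positivity) (le_rieszSum_insert ha S hl x)

lemma sum_card_inter_vadd_le_sum_log_rieszSum (ha : 0 ≤ a) (ha' : a < 1 / 2) (S D : Finset G) :
    2 * a * (1 - 2 * a) * ∑ l ∈ D, #(S ∩ (l +ᵥ S)) ≤ ∑ s ∈ S, Real.log (rieszSum a S D s) := by
  induction D using Finset.induction_on with
  | empty =>
    rw [sum_empty, Nat.cast_zero, mul_zero]
    exact sum_nonneg fun s hs ↦ by simp [hs]
  | insert l D hl ih =>
    rw [sum_insert hl, Nat.cast_add, mul_add, add_comm]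
    refine (add_le_add_left ih _).trans <| (sum_log_add_card_inter_vadd_le ha ha'
      (fun s hs ↦ rieszSum_pos ha D hs) (rieszSum_nonneg ha S D) l).trans ?_
    refine sum_le_sum fun s hs ↦ Real.log_le_log ?_ (le_rieszSum_insert ha S hl s)
    have hadd := rieszSum_nonneg ha S D (s + l)
    have hsub := rieszSum_nonneg ha S D (s - l)
    have hpos := rieszSum_pos ha D hs
    positivity

lemma card_filter_mem_le_of_addDissociated (hD : AddDissociated (D : Set G)) (S : Finset G)
    {f : G → G} (hf : Function.Injective f) : #{t ∈ D.powerset | f (∑ y ∈ t, y) ∈ S} ≤ #S := by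
  refine card_le_card_of_injOn (fun t ↦ f (∑ y ∈ t, y)) (fun t ht ↦ (mem_filter.1 ht).2) ?_
  exact hf.comp_injOn (hD.mono fun t ht ↦ by simpa using (mem_filter.1 ht).1)

lemma sum_powerset_pow_card {ι R : Type*} [CommSemiring R] (r : R) (D : Finset ι) :
    ∑ t ∈ D.powerset, r ^ #t = (1 + r) ^ #D := by
  rw [← prod_const, prod_one_add]
  simp

/-- By dissociativity, at most `#S` terms of `rieszSum` with a given `t` (or a given `u`) are
nonzero, and `a ^ #t * a ^ #u ≤ ((a ^ 2) ^ #t + (a ^ 2) ^ #u) / 2` separates `t` and `u`. -/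
lemma rieszSum_le_of_addDissociated (hD : AddDissociated (D : Set G)) (a : ℝ) (S : Finset G)
    (x : G) : rieszSum a S D x ≤ #S * (1 + a ^ 2) ^ #D := by
  let P (t u : Finset G) : Prop := x + ∑ y ∈ t, y - ∑ y ∈ u, y ∈ S
  have hrow (t : Finset G) : #{u ∈ D.powerset | P t u} ≤ #S :=
    card_filter_mem_le_of_addDissociated hD S sub_right_injective
  have hcol (u : Finset G) : #{t ∈ D.powerset | P t u} ≤ #S :=
    card_filter_mem_le_of_addDissociated hD S (f := fun z ↦ x + z - ∑ y ∈ u, y)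
      (sub_left_injective.comp (add_right_injective x))
  have hsum (Q : Finset G → Finset G → Prop) [∀ t u, Decidable (Q t u)]
      (hQ : ∀ t, #{u ∈ D.powerset | Q t u} ≤ #S) :
      ∑ t ∈ D.powerset, ∑ u ∈ D.powerset, (if Q t u then (a ^ 2) ^ #t else 0) ≤
        #S * (1 + a ^ 2) ^ #D := by
    rw [← sum_powerset_pow_card, mul_sum]
    refine sum_le_sum fun t _ ↦ ?_
    rw [← sum_filter, sum_const, nsmul_eq_mul]
    gcongr
    exact hQ t
  have hterm (t u : Finset G) : (if P t u then a ^ #t * a ^ #u else 0) ≤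
      (if P t u then (a ^ 2) ^ #t else 0) / 2 + (if P t u then (a ^ 2) ^ #u else 0) / 2 := by
    split_ifs
    · have := two_mul_le_add_sq (a ^ #t) (a ^ #u)
      rw [pow_right_comm, pow_right_comm a 2]
      linarith
    · simp
  calc rieszSum a S D x
      ≤ (∑ t ∈ D.powerset, ∑ u ∈ D.powerset, if P t u then (a ^ 2) ^ #t else 0) / 2 +
          (∑ u ∈ D.powerset, ∑ t ∈ D.powerset, if P t u then (a ^ 2) ^ #u else 0) / 2 := by
        rw [sum_comm (s := D.powerset) (t := D.powerset) (f := fun u t ↦ ite (P t u) _ _)]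
        simp only [sum_div, ← sum_add_distrib]
        exact sum_le_sum fun t _ ↦ sum_le_sum fun u _ ↦ hterm t u
    _ ≤ #S * (1 + a ^ 2) ^ #D := by linarith [hsum P hrow, hsum (fun u t ↦ P t u) hcol]

lemma mul_card_le_mul_log_of_addDissociated {ρ : ℝ} (hS : S.Nonempty)
    (hD : AddDissociated (D : Set G)) (hρ : 0 ≤ ρ)
    (h : ∀ l ∈ D, (#S : ℝ) ≤ ρ * #(S ∩ (l +ᵥ S))) (ha : 0 ≤ a) (ha' : a < 1 / 2) :
    2 * a * (1 - 2 * a) * #D ≤ ρ * (Real.log #S + #D * a ^ 2) := by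
  have hS₀ : (0 : ℝ) < #S := by exact_mod_cast hS.card_pos
  have hcard : (#D * #S : ℝ) ≤ ρ * ∑ l ∈ D, #(S ∩ (l +ᵥ S)) := by
    rw [Nat.cast_sum, mul_sum, ← nsmul_eq_mul, ← sum_const]
    exact sum_le_sum h
  have hlog (s) (hs : s ∈ S) : Real.log (rieszSum a S D s) ≤ Real.log #S + #D * a ^ 2 := by
    calc Real.log (rieszSum a S D s)
        ≤ Real.log (#S * (1 + a ^ 2) ^ #D) := Real.log_le_log (rieszSum_pos ha D hs)
          (rieszSum_le_of_addDissociated hD a S s)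
      _ = Real.log #S + #D * Real.log (1 + a ^ 2) := by
          rw [Real.log_mul hS₀.ne' (by positivity), Real.log_pow]
      _ ≤ Real.log #S + #D * a ^ 2 := by
          gcongr
          linarith [Real.log_le_sub_one_of_pos (show 0 < 1 + a ^ 2 by positivity)]
  have hcoef : 0 ≤ 2 * a * (1 - 2 * a) := mul_nonneg (by positivity) (by linarith)
  refine le_of_mul_le_mul_left ?_ hS₀
  calc #S * (2 * a * (1 - 2 * a) * #D)
      = 2 * a * (1 - 2 * a) * (#D * #S) := by ring
    _ ≤ 2 * a * (1 - 2 * a) * (ρ * ∑ l ∈ D, #(S ∩ (l +ᵥ S))) := by gcongr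
    _ = ρ * (2 * a * (1 - 2 * a) * ∑ l ∈ D, #(S ∩ (l +ᵥ S))) := by ring
    _ ≤ ρ * ∑ s ∈ S, Real.log (rieszSum a S D s) := by
        gcongr
        exact sum_card_inter_vadd_le_sum_log_rieszSum ha ha' S D
    _ ≤ ρ * ∑ _s ∈ S, (Real.log #S + #D * a ^ 2) := by
        gcongr with s hs
        exact hlog s hs
    _ = #S * (ρ * (Real.log #S + #D * a ^ 2)) := by rw [sum_const, nsmul_eq_mul]; ring

lemma card_le_mul_log_of_addDissociated {ρ : ℝ} (hS : S.Nonempty)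
    (hD : AddDissociated (D : Set G)) (h : ∀ l ∈ D, (#S : ℝ) ≤ ρ * #(S ∩ (l +ᵥ S))) :
    #D ≤ 5 * ρ ^ 2 * Real.log #S := by
  obtain rfl | ⟨l, hl⟩ := D.eq_empty_or_nonempty
  · have := Real.log_natCast_nonneg #S
    simp only [card_empty, Nat.cast_zero]
    positivity
  have hS₀ : (0 : ℝ) < #S := by exact_mod_cast hS.card_pos
  have hρ₀ : 0 < ρ := pos_of_mul_pos_left (hS₀.trans_le (h l hl)) (Nat.cast_nonneg _)
  have hρ : 1 ≤ ρ := by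
    refine one_le_of_le_mul_right₀ hS₀ ((h l hl).trans ?_)
    gcongr
    exact inter_subset_left
  have ha : (5 * ρ)⁻¹ ≤ 1 / 5 := by
    rw [inv_le_comm₀ (by positivity) (by norm_num)]
    linarith
  -- With `a = 1 / (5 * ρ)`, the loss `ρ * #D * a ^ 2` is a tenth of the gain `2 * a * #D`.
  have hmain := mul_card_le_mul_log_of_addDissociated hS hD hρ₀.le h (a := (5 * ρ)⁻¹)
    (by positivity) (by linarith)
  calc (#D : ℝ) = (2 * (1 - 2 * (1 / 5)) - 1 / 5) * #D := by ring
    _ ≤ (2 * (1 - 2 * (5 * ρ)⁻¹) - 1 / 5) * #D := by gcongr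
    _ = 5 * ρ * (2 * (5 * ρ)⁻¹ * (1 - 2 * (5 * ρ)⁻¹) * #D) - #D / 5 := by field_simp
    _ ≤ 5 * ρ * (ρ * (Real.log #S + #D * (5 * ρ)⁻¹ ^ 2)) - #D / 5 := by gcongr
    _ = 5 * ρ ^ 2 * Real.log #S := by field_simp; ring

end RieszSum

section DissociatedSpan

variable {G : Type*} [AddCommGroup G] {L : Finset G} {a : G}

lemma sum_sub_sum_mem_span {t u : Finset G} (ht : t ⊆ L) (hu : u ⊆ L) :
    ∑ x ∈ t, x - ∑ x ∈ u, x ∈ Span L := by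
  classical
  refine ⟨fun x ↦ (if x ∈ t then 1 else 0) - if x ∈ u then 1 else 0, fun x ↦ ?_, ?_⟩
  · by_cases x ∈ t <;> by_cases x ∈ u <;> simp [*]
  · simp [sub_smul, ite_smul, inter_eq_right.2 ht, inter_eq_right.2 hu]

lemma mem_span_of_not_addDissociated_insert (hL : AddDissociated (L : Set G))
    (ha : ¬ AddDissociated (insert a L : Set G)) : a ∈ Span L := by
  classical
  obtain ⟨t, u, ht, hu, hdisj, hne, hsum⟩ := not_addDissociated_iff_exists_disjoint.1 ha
  rw [← coe_insert, coe_subset] at ht hu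
  wlog hat : a ∈ t generalizing t u
  · by_cases hau : a ∈ u
    · exact this u t hu ht hdisj.symm hne.symm hsum.symm hau
    · refine (hne (hL ?_ ?_ hsum)).elim
      · exact (subset_insert_iff_of_notMem hat).1 ht
      · exact (subset_insert_iff_of_notMem hau).1 hu
  have hu' : u ⊆ L := (subset_insert_iff_of_notMem (disjoint_left.1 hdisj hat)).1 hu
  have haeq : a = ∑ x ∈ u, x - ∑ x ∈ t.erase a, x := by
    rw [← hsum, ← add_sum_erase t (fun x ↦ x) hat, add_sub_cancel_right]
  rw [haeq]
  exact sum_sub_sum_mem_span hu' (subset_insert_iff.1 ht)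

lemma exists_addDissociated_subset_span (Q : Finset G) :
    ∃ L ⊆ Q, AddDissociated (L : Set G) ∧ (Q : Set G) ⊆ Span L := by
  classical
  have hfinite : {L : Finset G | L ⊆ Q ∧ AddDissociated (L : Set G)}.Finite :=
    Q.powerset.finite_toSet.subset fun L hL ↦ by simpa using hL.1
  obtain ⟨L, -, hL⟩ := hfinite.exists_le_maximal (a := ∅) (by simp)
  refine ⟨L, hL.prop.1, hL.prop.2, fun a ha ↦ ?_⟩
  by_cases haL : AddDissociated (insert a L : Set G)
  · have hinsert : insert a L ⊆ L := hL.le_of_ge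
      ⟨insert_subset ha hL.prop.1, by rwa [coe_insert]⟩ (subset_insert a L)
    simpa using sum_sub_sum_mem_span
      (singleton_subset_iff.2 (insert_subset_iff.1 hinsert).1) (empty_subset L)
  · exact mem_span_of_not_addDissociated_insert hL.prop.2 haL

/-- Passing from `S` to `S ∪ (b +ᵥ S)` turns the almost periods `x - b` into almost periods `x`. -/
lemma exists_subset_span_of_almost_period [DecidableEq G] {S Q : Finset G} {ρ : ℝ} {b : G}
    (hρ : 0 ≤ ρ) (hS : S.Nonempty) (h : ∀ x ∈ Q, (#S : ℝ) ≤ ρ * #(S ∩ ((x - b) +ᵥ S))) :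
    ∃ L : Finset G, (Q : Set G) ⊆ Span L ∧ #L ≤ 20 * ρ ^ 2 * Real.log (2 * #S) := by
  obtain ⟨L, hLQ, hL, hQ⟩ := exists_addDissociated_subset_span Q
  let T := S ∪ (b +ᵥ S)
  have hT : T.Nonempty := hS.mono subset_union_left
  have hTS : (#T : ℝ) ≤ 2 * #S := by
    rw [two_mul]
    exact_mod_cast (card_union_le _ _).trans_eq (by rw [card_vadd_finset])
  have hperiod (x) (hx : x ∈ L) : (#T : ℝ) ≤ 2 * ρ * #(T ∩ (x +ᵥ T)) := by
    have hsub : b +ᵥ (S ∩ ((x - b) +ᵥ S)) ⊆ T ∩ (x +ᵥ T) := by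
      rw [vadd_finset_inter, vadd_vadd, add_sub_cancel]
      exact inter_subset_inter subset_union_right
        (vadd_finset_subset_vadd_finset subset_union_left)
    calc (#T : ℝ) ≤ 2 * (ρ * #(S ∩ ((x - b) +ᵥ S))) := hTS.trans (by gcongr; exact h x (hLQ hx))
      _ = 2 * ρ * #(b +ᵥ (S ∩ ((x - b) +ᵥ S))) := by rw [card_vadd_finset, mul_assoc]
      _ ≤ 2 * ρ * #(T ∩ (x +ᵥ T)) := by gcongr
  refine ⟨L, hQ, ?_⟩
  calc (#L : ℝ) ≤ 5 * (2 * ρ) ^ 2 * Real.log #T :=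
        card_le_mul_log_of_addDissociated hT hL hperiod
    _ ≤ 5 * (2 * ρ) ^ 2 * Real.log (2 * #S) := by gcongr
    _ = 20 * ρ ^ 2 * Real.log (2 * #S) := by ring

end DissociatedSpan

section Sumset

variable {G : Type*} [AddCommGroup G] [DecidableEq G] {A B : Finset G}

lemma add_inter_vadd_subset (A B : Finset G) (s : G) :
    A + (B ∩ (s +ᵥ B)) ⊆ (A + B) ∩ (s +ᵥ (A + B)) := by
  refine subset_inter (add_subset_add_left inter_subset_left) ?_
  rw [← add_vadd_comm]
  exact add_subset_add_left inter_subset_right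

lemma log_two_mul_card_add_le (hA : 2 ≤ #A) (hBA : B ⊆ A) (hB : B.Nonempty) :
    Real.log (2 * #(A + B)) ≤ 3 * Real.log #A := by
  have hAB : 0 < #(A + B) := ((card_pos.1 (by lia)).add hB).card_pos
  have hcard : 2 * #(A + B) ≤ #A ^ 3 :=
    calc 2 * #(A + B) ≤ #A * (#A * #A) :=
          Nat.mul_le_mul hA (card_add_le.trans (Nat.mul_le_mul_left _ (card_le_card hBA)))
      _ = #A ^ 3 := by ring
  rw [← Nat.cast_ofNat (n := 3), ← Real.log_pow]
  exact Real.log_le_log (by positivity) (by exact_mod_cast hcard)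

lemma card_sub_self_le {K : ℝ} (hA : A.Nonempty) (hAK : (#(A + A) : ℝ) ≤ K * #A) :
    (#(A - A) : ℝ) ≤ K ^ 2 * #A := by
  have hA₀ : (0 : ℝ) < #A := by exact_mod_cast hA.card_pos
  refine le_of_mul_le_mul_right ?_ hA₀
  calc (#(A - A) : ℝ) * #A ≤ #(A + A) * #(A + A) := by
        exact_mod_cast ruzsa_triangle_inequality_sub_add_add A A A
    _ ≤ (K * #A) * (K * #A) := mul_self_le_mul_self (Nat.cast_nonneg _) hAK
    _ = K ^ 2 * #A * #A := by ring

lemma card_filter_sub_eq (B : Finset G) (d : G) :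
    #{p ∈ B ×ˢ B | p.1 - p.2 = d} = #(B ∩ (d +ᵥ B)) := by
  rw [card_sub_eq, card_inter_vadd]

lemma two_mul_card_unpopular_sub_le (B : Finset G) :
    2 * #{p ∈ B ×ˢ B | 2 * #(B - B) * #(B ∩ ((p.1 - p.2) +ᵥ B)) < #B ^ 2} ≤ #B ^ 2 := by
  obtain rfl | hB := B.eq_empty_or_nonempty
  · simp
  set U := {p ∈ B ×ˢ B | 2 * #(B - B) * #(B ∩ ((p.1 - p.2) +ᵥ B)) < #B ^ 2} with hU
  have hfiber (d : G) : 2 * #(B - B) * #{p ∈ U | p.1 - p.2 = d} ≤ #B ^ 2 := by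
    obtain h | ⟨p, hp⟩ := {p ∈ U | p.1 - p.2 = d}.eq_empty_or_nonempty
    · simp [h]
    · simp only [hU, mem_filter] at hp
      obtain ⟨⟨-, hp⟩, rfl⟩ := hp
      refine (Nat.mul_le_mul_left _ ?_).trans hp.le
      rw [← card_filter_sub_eq]
      exact card_le_card (filter_subset_filter _ (filter_subset _ _))
  refine Nat.le_of_mul_le_mul_left ?_ (hB.sub hB).card_pos
  calc #(B - B) * (2 * #U) = ∑ d ∈ B - B, 2 * #(B - B) * #{p ∈ U | p.1 - p.2 = d} := by
        rw [← mul_sum, ← card_eq_sum_card_fiberwise]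
        · ring
        · intro p hp
          have := mem_product.1 (mem_filter.1 hp).1
          exact sub_mem_sub this.1 this.2
    _ ≤ ∑ _d ∈ B - B, #B ^ 2 := sum_le_sum fun d _ ↦ hfiber d
    _ = #(B - B) * #B ^ 2 := by rw [sum_const, smul_eq_mul]

lemma exists_half_popular_sub (hB : B.Nonempty) :
    ∃ b ∈ B, #B ≤ 2 * #{x ∈ B | #B ^ 2 ≤ 2 * #(B - B) * #(B ∩ ((x - b) +ᵥ B))} := by
  have hpopular :
      #B ^ 2 ≤ 2 * #{p ∈ B ×ˢ B | #B ^ 2 ≤ 2 * #(B - B) * #(B ∩ ((p.1 - p.2) +ᵥ B))} := by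
    have hcompl := card_filter_add_card_filter_not (s := B ×ˢ B)
      (fun p ↦ #B ^ 2 ≤ 2 * #(B - B) * #(B ∩ ((p.1 - p.2) +ᵥ B)))
    simp only [not_le, card_product, ← sq] at hcompl
    have := two_mul_card_unpopular_sub_le B
    lia
  refine exists_le_of_sum_le hB ?_
  rw [sum_const, smul_eq_mul, ← sq, ← mul_sum]
  refine hpopular.trans_eq ?_
  simp only [card_filter, sum_product_right]

end Sumset

section Refinement

variable {G : Type*} [AddCommGroup G] [DecidableEq G] {A B : Finset G} {M ρ K : ℝ} {i : ℕ}

/-- The invariant of the iteration `B ↦ B ∩ (s +ᵥ B)` after `i` steps starting from `B = A`. Each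
step squares the relative density of `B` in `A`, up to a factor `M`, and divides the bound `K * #A`
on `#(A + B)` by `ρ`. -/
structure IsRefinement (A : Finset G) (M ρ K : ℝ) (i : ℕ) (B : Finset G) : Prop where
  subset : B ⊆ A
  nonempty : B.Nonempty
  mul_card_le : M * #A ≤ M ^ 2 ^ i * #B
  pow_mul_card_add_le : ρ ^ i * #(A + B) ≤ K * #A

namespace IsRefinement

lemma refl (hA : A.Nonempty) (hAK : (#(A + A) : ℝ) ≤ K * #A) : IsRefinement A M ρ K 0 A where
  subset := Subset.rfl
  nonempty := hA
  mul_card_le := by simp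
  pow_mul_card_add_le := by simpa using hAK

lemma pow_le (hB : IsRefinement A M ρ K i B) (hρ : 0 ≤ ρ) : ρ ^ i ≤ K := by
  have hA : (0 : ℝ) < #A := by exact_mod_cast (hB.nonempty.mono hB.subset).card_pos
  refine le_of_mul_le_mul_right (le_trans ?_ hB.pow_mul_card_add_le) hA
  gcongr ρ ^ i * ?_
  exact_mod_cast card_le_card_add_right hB.nonempty

lemma inter_vadd (hB : IsRefinement A M ρ K i B) (hM : 0 < M) (hρ : 0 ≤ ρ) {s : G}
    (hs : (#B : ℝ) ^ 2 ≤ M * #A * #(B ∩ (s +ᵥ B)))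
    (hlt : ρ * #(A + (B ∩ (s +ᵥ B))) < #(A + B)) :
    IsRefinement A M ρ K (i + 1) (B ∩ (s +ᵥ B)) where
  subset := inter_subset_left.trans hB.subset
  nonempty := by
    have hB₀ : (0 : ℝ) < #B := by exact_mod_cast hB.nonempty.card_pos
    by_contra! hempty
    simp only [hempty, card_empty, Nat.cast_zero, mul_zero] at hs
    exact (pow_pos hB₀ 2).not_ge hs
  mul_card_le := by
    have hA : (0 : ℝ) < #A := by exact_mod_cast (hB.nonempty.mono hB.subset).card_pos
    refine le_of_mul_le_mul_right ?_ (mul_pos hM hA)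
    calc M * #A * (M * #A) ≤ (M ^ 2 ^ i * #B) * (M ^ 2 ^ i * #B) :=
          mul_self_le_mul_self (by positivity) hB.mul_card_le
      _ = M ^ 2 ^ (i + 1) * #B ^ 2 := by ring
      _ ≤ M ^ 2 ^ (i + 1) * (M * #A * #(B ∩ (s +ᵥ B))) := by gcongr
      _ = M ^ 2 ^ (i + 1) * #(B ∩ (s +ᵥ B)) * (M * #A) := by ring
  pow_mul_card_add_le :=
    calc ρ ^ (i + 1) * #(A + (B ∩ (s +ᵥ B)))
        = ρ ^ i * (ρ * #(A + (B ∩ (s +ᵥ B)))) := by ring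
      _ ≤ ρ ^ i * #(A + B) := by gcongr
      _ ≤ K * #A := hB.pow_mul_card_add_le

end IsRefinement

lemma exists_isRefinement_forall_card_add_le (hA : A.Nonempty) (hAK : (#(A + A) : ℝ) ≤ K * #A)
    (hM : 0 < M) (hρ : 1 < ρ) :
    ∃ i B, IsRefinement A M ρ K i B ∧ ∀ s : G, (#B : ℝ) ^ 2 ≤ M * #A * #(B ∩ (s +ᵥ B)) →
      (#(A + B) : ℝ) ≤ ρ * #(A + (B ∩ (s +ᵥ B))) := by
  by_contra! hstep
  have hρ₀ : 0 ≤ ρ := by linarith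
  have hall (i : ℕ) : ∃ B, IsRefinement A M ρ K i B := by
    induction i with
    | zero => exact ⟨A, .refl hA hAK⟩
    | succ i ih =>
      obtain ⟨B, hB⟩ := ih
      obtain ⟨s, hs, hlt⟩ := hstep i B hB
      exact ⟨_, hB.inter_vadd hM hρ₀ hs hlt⟩
  obtain ⟨i, hi⟩ := pow_unbounded_of_one_lt K hρ
  obtain ⟨B, hB⟩ := hall i
  exact (hB.pow_le hρ₀).not_gt hi

end Refinement

section SmallDoubling

variable {G : Type*} [AddCommGroup G] [DecidableEq G] {A : Finset G} {K : ℝ}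

lemma one_le_of_card_add_self_le (hA : A.Nonempty) (hAK : (#(A + A) : ℝ) ≤ K * #A) : 1 ≤ K := by
  have hA₀ : (0 : ℝ) < #A := by exact_mod_cast hA.card_pos
  refine one_le_of_le_mul_right₀ hA₀ (le_trans ?_ hAK)
  exact_mod_cast card_le_card_add_left hA

lemma exists_subset_span_of_card_add_self_le (hA : 2 ≤ #A) (hAK : (#(A + A) : ℝ) ≤ K * #A) :
    ∃ L : Finset G, (A : Set G) ⊆ Span L ∧ #L ≤ 60 * K ^ 2 * Real.log #A := by
  obtain ⟨b, hb⟩ : A.Nonempty := card_pos.1 (by lia)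
  have hK : 1 ≤ K := one_le_of_card_add_self_le ⟨b, hb⟩ hAK
  obtain ⟨L, hAL, hL⟩ := exists_subset_span_of_almost_period (S := A + A) (Q := A) (ρ := K) (b := b)
    (by linarith) ⟨b + b, add_mem_add hb hb⟩ fun x hx ↦ by
      have hsub : x +ᵥ A ⊆ (A + A) ∩ ((x - b) +ᵥ (A + A)) := by
        refine subset_inter (vadd_finset_subset_add hx) ?_
        rw [← sub_add_cancel x b, ← vadd_vadd, add_sub_cancel_right]
        exact vadd_finset_subset_vadd_finset (vadd_finset_subset_add hb)
      refine hAK.trans ?_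
      rw [← card_vadd_finset x A]
      gcongr
  refine ⟨L, hAL, hL.trans ?_⟩
  calc 20 * K ^ 2 * Real.log (2 * #(A + A)) ≤ 20 * K ^ 2 * (3 * Real.log #A) := by
        gcongr
        exact log_two_mul_card_add_le hA Subset.rfl ⟨b, hb⟩
    _ = 60 * K ^ 2 * Real.log #A := by ring

lemma exists_large_subset_span {ρ : ℝ} (hA : 2 ≤ #A) (hAK : (#(A + A) : ℝ) ≤ K * #A)
    (hρ : 1 < ρ) :
    ∃ (i : ℕ) (Q L : Finset G), ρ ^ i ≤ K ∧ Q ⊆ A ∧ (Q : Set G) ⊆ Span L ∧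
      K ^ 2 * #A ≤ (2 * K ^ 2) ^ 2 ^ i * #Q ∧ #L ≤ 60 * ρ ^ 2 * Real.log #A := by
  have hA₀ : A.Nonempty := card_pos.1 (by lia)
  have hρ₀ : 0 ≤ ρ := by linarith
  have hK : 1 ≤ K := one_le_of_card_add_self_le hA₀ hAK
  obtain ⟨i, B, hB, hstable⟩ := exists_isRefinement_forall_card_add_le hA₀ hAK
    (M := 2 * K ^ 2) (by positivity) hρ
  obtain ⟨b, -, hpopular⟩ := exists_half_popular_sub hB.nonempty
  set Q := {x ∈ B | #B ^ 2 ≤ 2 * #(B - B) * #(B ∩ ((x - b) +ᵥ B))}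
  have hdiff : (#(B - B) : ℝ) ≤ K ^ 2 * #A := by
    refine le_trans ?_ (card_sub_self_le hA₀ hAK)
    exact_mod_cast card_le_card (sub_subset_sub hB.subset hB.subset)
  have hperiod (x) (hx : x ∈ Q) : (#(A + B) : ℝ) ≤ ρ * #((A + B) ∩ ((x - b) +ᵥ (A + B))) := by
    have hQ : (#B : ℝ) ^ 2 ≤ 2 * #(B - B) * #(B ∩ ((x - b) +ᵥ B)) := by
      exact_mod_cast (mem_filter.1 hx).2
    refine (hstable (x - b) (hQ.trans ?_)).trans ?_
    · rw [mul_assoc 2 (K ^ 2)]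
      gcongr
    · gcongr
      exact add_inter_vadd_subset A B (x - b)
  obtain ⟨L, hQL, hL⟩ :=
    exists_subset_span_of_almost_period hρ₀ (hA₀.add hB.nonempty) hperiod
  refine ⟨i, Q, L, hB.pow_le hρ₀, (filter_subset _ _).trans hB.subset, hQL, ?_, hL.trans ?_⟩
  · have hBQ : (#B : ℝ) ≤ 2 * #Q := by exact_mod_cast hpopular
    have := hB.mul_card_le.trans (mul_le_mul_of_nonneg_left hBQ (by positivity))
    linarith
  · have := log_two_mul_card_add_le hA hB.subset hB.nonempty
    calc 20 * ρ ^ 2 * Real.log (2 * #(A + B)) ≤ 20 * ρ ^ 2 * (3 * Real.log #A) := by gcongr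
      _ = 60 * ρ ^ 2 * Real.log #A := by ring

lemma two_mul_sq_pow_two_pow_le {η : ℝ} {i : ℕ} (hK : 2 ≤ K) (hη : 0 < η)
    (hi : (K ^ (η / 2)) ^ i ≤ K) :
    (2 * K ^ 2) ^ 2 ^ i ≤ K ^ (3 * Real.exp (3 / η)) := by
  have hK₀ : 0 ≤ K := by linarith
  have hK₁ : 1 < K := by linarith
  have hiη : i ≤ 3 / η := by
    have hexponent : η / 2 * i ≤ 1 := by
      rwa [← Real.rpow_le_rpow_left_iff hK₁, Real.rpow_one, Real.rpow_mul_natCast hK₀]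
    rw [le_div_iff₀ hη]
    linarith
  have hexp : (2 ^ i : ℝ) ≤ Real.exp (3 / η) := by
    calc (2 ^ i : ℝ) ≤ Real.exp 1 ^ i := by
          gcongr
          linarith [Real.add_one_le_exp 1]
      _ = Real.exp i := by rw [← Real.exp_nat_mul, mul_one]
      _ ≤ Real.exp (3 / η) := Real.exp_le_exp.2 hiη
  calc (2 * K ^ 2) ^ 2 ^ i ≤ (K * K ^ 2) ^ 2 ^ i := by gcongr
    _ = K ^ (3 * 2 ^ i : ℝ) := by
        rw [Real.rpow_mul hK₀]
        norm_cast
        ring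
    _ ≤ K ^ (3 * Real.exp (3 / η)) := by gcongr; exact hK₁.le

end SmallDoubling

theorem structure_in_sets_with_logarithmic_doubling_general {G : Type*} [AddCommGroup G]
    [DecidableEq G] {A : Finset G} {K η : ℝ} (hA : 2 ≤ #A) (hAK : (#(A + A) : ℝ) ≤ K * #A)
    (hη : 0 < η) :
    ∃ L : Finset G, K ^ (-(3 * Real.exp (3 / η))) * #A ≤ ((↑A ∩ Span L).ncard : ℝ) ∧
      #L ≤ 240 * K ^ η * Real.log #A := by
  have hK : 1 ≤ K := one_le_of_card_add_self_le (card_pos.1 (by lia)) hAK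
  have hK₀ : 0 ≤ K := by linarith
  obtain hK₂ | hK₂ := le_total K 2
  · obtain ⟨L, hAL, hL⟩ := exists_subset_span_of_card_add_self_le hA hAK
    refine ⟨L, ?_, hL.trans ?_⟩
    · rw [Set.inter_eq_left.2 hAL, Set.ncard_coe_finset]
      refine mul_le_of_le_one_left (Nat.cast_nonneg _) (Real.rpow_le_one_of_one_le_of_nonpos hK ?_)
      linarith [Real.exp_pos (3 / η)]
    · gcongr ?_ * _
      nlinarith [Real.one_le_rpow hK hη.le]
  · have hρ : 1 < K ^ (η / 2) := Real.one_lt_rpow (by linarith) (half_pos hη)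
    obtain ⟨i, Q, L, hi, hQA, hQL, hQ, hL⟩ := exists_large_subset_span hA hAK hρ
    refine ⟨L, ?_, hL.trans ?_⟩
    · have hcard : (#Q : ℝ) ≤ (↑A ∩ Span L).ncard := by
        rw [← Set.ncard_coe_finset]
        exact_mod_cast Set.ncard_le_ncard (Set.subset_inter (coe_subset.2 hQA) hQL)
          (A.finite_toSet.inter_of_left _)
      rw [Real.rpow_neg hK₀, inv_mul_le_iff₀ (by positivity)]
      calc (#A : ℝ) ≤ K ^ 2 * #A := le_mul_of_one_le_left (Nat.cast_nonneg _) (one_le_pow₀ hK)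
        _ ≤ (2 * K ^ 2) ^ 2 ^ i * #Q := hQ
        _ ≤ K ^ (3 * Real.exp (3 / η)) * (↑A ∩ Span L).ncard := by
            gcongr
            exact two_mul_sq_pow_two_pow_le hK₂ hη hi
    · rw [← Real.rpow_mul_natCast hK₀]
      gcongr <;> norm_num

theorem structure_in_sets_with_logarithmic_doubling :
    ∃ C₁ C₂ : ℝ, 0 < C₁ ∧ 0 < C₂ ∧
      ∀ (G : Type) [AddCommGroup G] [DecidableEq G] (A : Finset G) (K η : ℝ),
        2 ≤ A.card → 1 ≤ K → ((A + A).card : ℝ) ≤ K * A.card → 0 < η → η ≤ 1 →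
        ∃ L : Finset G,
          K ^ (-(C₁ * Real.exp (C₁ / η))) * A.card ≤ ((↑A ∩ Span L).ncard : ℝ) ∧
          (L.card : ℝ) ≤ C₂ * K ^ η * Real.log A.card :=
  ⟨3, 240, by norm_num, by norm_num, fun _ _ _ _ _ _ hA _ hAK hη _ ↦
    structure_in_sets_with_logarithmic_doubling_general hA hAK hη⟩
end

section
/- There exist a function E : ℕ → ℝ with E(r) ≥ 0 for all r, together with absolute constants c > 0 and r₀ ∈ ℕ such that E(r) ≥ c·log r for all r ≥ r₀, with the following property: for every finite field F and every integer r ≥ 3 there is a constant C = C(|F|, r) > 0 such that for every n ≥ 1, if a₁, …, a_r ∈ F∖{0} satisfy a₁ + ⋯ + a_r = 0 and A ⊆ F^n contains no solution to a₁·x₁ + ⋯ + a_r·x_r = 0 with x₁, …, x_r ∈ A pairwise distinct, then |A| ≤ C·|F|^n / n^{r−2+E(r)}. -/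
/-!
Sets without the required solutions are even exponentially small, so every power of `n` may be
saved. Let `q = |F|`. For `β ≠ 0`, if every solution of `α (y - x) + β (z - x) = 0` in `A ⊆ F ^ n`
has `x = y`, then the tensor `∏ c, (1 - (α (y - x) + β (z - x)) c ^ (q - 1))` on `A` is diagonal, so
its slice rank is `|A|`. Each monomial of this product has total degree at most `(q - 1) n / 3` in
one of `x`, `y`, `z`, so `|A|` is at most three times the number of monomials of such low degree,
which is exponentially smaller than `q ^ n`.

For an equation in `r ≥ 3` variables, give all variables but two the same value: every set that is
not exponentially small contains, for prescribed `i ≠ j`, a solution with `x i ≠ x j`. Solutions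
separating different pairs are combined by splitting `F ^ n = F ^ m × F ^ d` with `d` a small
multiple of `n`: many points of `F ^ m` carry the same separating solution in `F ^ d`, and among
these points there is a solution separating the other pairs.
-/

open Finset Module
open scoped Matrix

section SliceRank

variable {F X τ : Type*} [Field F]

theorem exists_mem_finrank_le_ncard_support [Finite X] (W : Submodule F (X → F)) :
    ∃ v ∈ W, finrank F W ≤ (Function.support v).ncard := by
  obtain ⟨v, hv, hmax⟩ := Set.Finite.exists_maximalFor' Function.support (W : Set (X → F))
    (Set.toFinite _) ⟨0, W.zero_mem⟩
  refine ⟨v, hv, ?_⟩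
  let res : W →ₗ[F] (Function.support v → F) := (LinearMap.funLeft F F Subtype.val).comp W.subtype
  have hres : Function.Injective res := by
    rw [← LinearMap.ker_eq_bot, LinearMap.ker_eq_bot']
    rintro ⟨w, hw⟩ hw0
    have hdisj : ∀ x, v x ≠ 0 → w x = 0 := fun x hx => congrFun hw0 ⟨x, hx⟩
    have hle : Function.support v ⊆ Function.support (v + w) := fun x hx => by
      simpa [hdisj x hx] using hx
    ext x
    by_contra hwx
    have hvx : v x = 0 := by_contra fun hvx => hwx (hdisj x hvx)
    exact hmax (W.add_mem hv hw) hle (show (v + w) x ≠ 0 by simpa [hvx] using hwx) hvx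
  calc finrank F W ≤ finrank F (Function.support v → F) :=
        LinearMap.finrank_le_finrank_of_injective hres
    _ = (Function.support v).ncard := by
      have := Fintype.ofFinite X
      classical
      rw [finrank_fintype_fun_eq_card, ← Nat.card_eq_fintype_card, Nat.card_coe_set_eq]

variable [Fintype X]

theorem exists_dotProduct_eq_zero_card_le_ncard_support_add (U : Submodule F (X → F)) :
    ∃ v : X → F, (∀ u ∈ U, v ⬝ᵥ u = 0) ∧
      Fintype.card X ≤ (Function.support v).ncard + finrank F U := by
  classical
  obtain ⟨v, hv, hsupp⟩ := exists_mem_finrank_le_ncard_support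
    (U.dualAnnihilator.map (dotProductEquiv F X).symm.toLinearMap)
  refine ⟨v, ?_, ?_⟩
  · obtain ⟨φ, hφ, rfl⟩ := hv
    intro u hu
    have := (Submodule.mem_dualAnnihilator φ).1 hφ u hu
    rwa [← (dotProductEquiv F X).apply_symm_apply φ] at this
  · have hdim := Subspace.finrank_add_finrank_dualAnnihilator_eq U
    rw [LinearEquiv.finrank_map_eq] at hsupp
    rw [finrank_fintype_fun_eq_card] at hdim
    omega

theorem rank_add_le_rank_add_rank {m n : Type*} [Finite m] [Fintype n] (M N : Matrix m n F) :
    (M + N).rank ≤ M.rank + N.rank := by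
  calc (M + N).rank ≤ finrank F ↥(M.mulVecLin.range ⊔ N.mulVecLin.range) := by
        refine Submodule.finrank_mono ?_
        rw [Matrix.mulVecLin_add]
        exact LinearMap.range_add_le _ _
    _ ≤ M.rank + N.rank := Submodule.finrank_add_le_finrank_add_finrank _ _

theorem rank_sum_vecMulVec_le_of_forall_mem {S : Finset τ} {g h : τ → X → F}
    {V : Submodule F (X → F)} (hV : ∀ p ∈ S, g p ∈ V) :
    (∑ p ∈ S, Matrix.vecMulVec (g p) (h p)).rank ≤ finrank F V := by
  refine Submodule.finrank_mono ?_
  rintro _ ⟨u, rfl⟩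
  simp only [Matrix.mulVecLin_apply, Matrix.sum_mulVec, Matrix.vecMulVec_mulVec, op_smul_eq_smul]
  exact V.sum_mem fun p hp => V.smul_mem _ (hV p hp)

theorem rank_sum_vecMulVec_le_of_forall_mem_or_mem {S : Finset τ} {g h : τ → X → F}
    {V W : Submodule F (X → F)} (hVW : ∀ p ∈ S, g p ∈ V ∨ h p ∈ W) :
    (∑ p ∈ S, Matrix.vecMulVec (g p) (h p)).rank ≤ finrank F V + finrank F W := by
  classical
  rw [← sum_filter_add_sum_filter_not S (g · ∈ V)]
  refine (rank_add_le_rank_add_rank _ _).trans (add_le_add ?_ ?_)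
  · exact rank_sum_vecMulVec_le_of_forall_mem fun p hp => (mem_filter.1 hp).2
  · rw [← Matrix.rank_transpose, Matrix.transpose_sum]
    simp only [Matrix.transpose_vecMulVec]
    exact rank_sum_vecMulVec_le_of_forall_mem fun p hp =>
      (hVW p (mem_filter.1 hp).1).resolve_left (mem_filter.1 hp).2

theorem card_le_finrank_add_of_sum_eq_diagonal [DecidableEq X] {S : Finset τ} {f g h : τ → X → F}
    {U V W : Submodule F (X → F)} (hUVW : ∀ p ∈ S, f p ∈ U ∨ g p ∈ V ∨ h p ∈ W) {d : X → F}
    (hd : ∀ x, d x ≠ 0)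
    (hdiag : ∀ x y z, ∑ p ∈ S, f p x * g p y * h p z = if x = y ∧ y = z then d x else 0) :
    Fintype.card X ≤ finrank F U + finrank F V + finrank F W := by
  classical
  obtain ⟨v, hvU, hv⟩ := exists_dotProduct_eq_zero_card_le_ncard_support_add U
  have hcontract : Matrix.diagonal (fun x => v x * d x) =
      ∑ p ∈ S, Matrix.vecMulVec ((v ⬝ᵥ f p) • g p) (h p) := by
    ext y z
    calc Matrix.diagonal (fun x => v x * d x) y z
        = ∑ x, v x * ∑ p ∈ S, f p x * g p y * h p z := by
          simp_rw [hdiag]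
          rcases eq_or_ne y z with rfl | hyz <;> simp [*]
      _ = ∑ p ∈ S, (v ⬝ᵥ f p) * (g p y * h p z) := by
          simp only [dotProduct, sum_mul, mul_sum]
          rw [sum_comm]
          simp only [mul_assoc]
      _ = _ := by simp [Matrix.sum_apply, Matrix.vecMulVec_apply]
  have hrank : (Matrix.diagonal fun x => v x * d x).rank ≤ finrank F V + finrank F W := by
    rw [hcontract]
    refine rank_sum_vecMulVec_le_of_forall_mem_or_mem fun p hp => ?_
    rcases hUVW p hp with hU | hV | hW
    · exact .inl (by simp [hvU _ hU])
    · exact .inl (V.smul_mem _ hV)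
    · exact .inr hW
  have hsupp : (Matrix.diagonal fun x => v x * d x).rank = (Function.support v).ncard := by
    rw [Matrix.rank_diagonal, ← Nat.card_eq_fintype_card, ← Nat.card_coe_set_eq]
    simp only [ne_eq, mul_eq_zero, hd, or_false]
    rfl
  omega

end SliceRank

section LowDegree

/-- Exponent vectors of the monomials in `n` variables whose degree in each variable is at most `D`
and whose total degree is at most a third of the maximum `D * n`. -/
def lowDegreeExponents (D n : ℕ) : Finset (Fin n → ℕ) :=
  {e ∈ Fintype.piFinset fun _ => range (D + 1) | 3 * ∑ c, e c ≤ D * n}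

theorem mem_lowDegreeExponents {D n : ℕ} {e : Fin n → ℕ} :
    e ∈ lowDegreeExponents D n ↔ (∀ c, e c ≤ D) ∧ 3 * ∑ c, e c ≤ D * n := by
  simp [lowDegreeExponents]

-- At `y = 1` both sides agree, and the left-hand side has the larger derivative.
theorem exists_sum_pow_lt_mul_pow {D : ℕ} (hD : 0 < D) :
    ∃ y : ℝ, 0 < y ∧ y < 1 ∧ ∑ j ∈ range (D + 1), (y ^ 3) ^ j < (D + 1) * y ^ D := by
  let g : ℝ → ℝ := fun y => ∑ j ∈ range (D + 1), y ^ (3 * j) - (D + 1) * y ^ D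
  have hderiv : HasDerivAt g (∑ j ∈ range (D + 1), ((3 * j : ℕ) : ℝ) - (D + 1) * D) 1 := by
    simpa using (HasDerivAt.fun_sum fun j (_ : j ∈ range (D + 1)) =>
      hasDerivAt_pow (3 * j) (1 : ℝ)).fun_sub ((hasDerivAt_pow D (1 : ℝ)).const_mul ((D : ℝ) + 1))
  have hpos : 0 < deriv g 1 := by
    have hgauss := congrArg (Nat.cast : ℕ → ℝ) (sum_range_id_mul_two (D + 1))
    push_cast [add_tsub_cancel_right] at hgauss
    have : (0 : ℝ) < (D + 1) * D := by positivity
    rw [hderiv.deriv]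
    push_cast
    rw [← mul_sum]
    linarith
  have hsign := (eventually_nhdsWithin_sign_eq_of_deriv_pos hpos (by simp [g])).filter_mono
    (nhdsWithin_le_nhds (s := Set.Iio 1))
  obtain ⟨y, hgy, hy0, hy1⟩ := (hsign.and (Ioo_mem_nhdsLT one_pos)).exists
  rw [sign_neg (sub_neg.2 hy1), sign_eq_neg_one_iff] at hgy
  exact ⟨y, hy0, hy1, by simpa [g, pow_mul] using hgy⟩

theorem exists_card_lowDegreeExponents_le_mul_pow {D : ℕ} (hD : 0 < D) :
    ∃ θ : ℝ, 0 < θ ∧ θ < 1 ∧ ∀ n, (#(lowDegreeExponents D n) : ℝ) ≤ (θ * (D + 1)) ^ n := by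
  -- Markov's inequality: the weight `∏ c, (y ^ 3) ^ e c` is at least `y ^ (D * n)` on each exponent
  -- vector counted, while the weights of all exponent vectors sum to `G ^ n`.
  obtain ⟨y, hy0, hy1, hy⟩ := exists_sum_pow_lt_mul_pow hD
  set G := ∑ j ∈ range (D + 1), (y ^ 3) ^ j with hG
  have hG0 : 0 < G := sum_pos (fun j _ => by positivity) nonempty_range_add_one
  refine ⟨G / ((D + 1) * y ^ D), by positivity, (div_lt_one (by positivity)).2 hy, fun n => ?_⟩
  have hθ : G / ((D + 1) * y ^ D) * (D + 1) = G / y ^ D := by field_simp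
  rw [hθ, div_pow, le_div_iff₀ (by positivity), ← nsmul_eq_mul, ← sum_const]
  calc ∑ _ ∈ lowDegreeExponents D n, (y ^ D) ^ n
      ≤ ∑ e ∈ lowDegreeExponents D n, ∏ c, (y ^ 3) ^ e c := by
        refine sum_le_sum fun e he => ?_
        rw [prod_pow_eq_pow_sum, ← pow_mul, ← pow_mul]
        exact pow_le_pow_of_le_one hy0.le hy1.le (mem_lowDegreeExponents.1 he).2
    _ ≤ ∑ e ∈ Fintype.piFinset fun _ : Fin n => range (D + 1), ∏ c, (y ^ 3) ^ e c :=
        sum_le_sum_of_subset_of_nonneg (filter_subset _ _) fun _ _ _ => by positivity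
    _ = G ^ n := by rw [← prod_univ_sum, prod_const, card_univ, Fintype.card_fin]

theorem exists_card_lowDegreeExponents_le_pow_sub {D : ℕ} (hD : 0 < D) :
    ∃ k, 0 < k ∧ ∀ n, #(lowDegreeExponents D n) ≤ (D + 1) ^ (n - n / k) := by
  obtain ⟨θ, hθ0, hθ1, hθ⟩ := exists_card_lowDegreeExponents_le_mul_pow hD
  have hq : (0 : ℝ) < 1 / (D + 1) := by positivity
  obtain ⟨k, hk⟩ := exists_pow_lt_of_lt_one hq hθ1
  refine ⟨k + 1, k.succ_pos, fun n => ?_⟩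
  have hk' : θ ^ (k + 1) ≤ 1 / (D + 1) :=
    (pow_le_pow_of_le_one hθ0.le hθ1.le k.le_succ).trans hk.le
  have hdiv : (k + 1) * (n / (k + 1)) ≤ n := Nat.mul_div_le n (k + 1)
  have hreal : (#(lowDegreeExponents D n) : ℝ) ≤ (D + 1) ^ (n - n / (k + 1)) := by
    calc (#(lowDegreeExponents D n) : ℝ) ≤ θ ^ n * (D + 1) ^ n := by rw [← mul_pow]; exact hθ n
      _ ≤ (θ ^ (k + 1)) ^ (n / (k + 1)) * (D + 1) ^ n := by
          rw [← pow_mul]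
          gcongr 1
          exact pow_le_pow_of_le_one hθ0.le hθ1.le hdiv
      _ ≤ (1 / (D + 1)) ^ (n / (k + 1)) * (D + 1) ^ n := by gcongr
      _ = (D + 1) ^ (n - n / (k + 1)) := by
          rw [pow_sub₀ _ (by positivity) (Nat.div_le_self n (k + 1)), one_div, inv_pow, mul_comm]
  exact_mod_cast hreal

theorem exists_mem_lowDegreeExponents {D n : ℕ} {e : Fin 3 → Fin n → ℕ}
    (he : ∀ c, ∑ i, e i c ≤ D) : ∃ i, e i ∈ lowDegreeExponents D n := by
  by_contra! hlow
  have hle : ∀ i c, e i c ≤ D := fun i c =>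
    (single_le_sum (f := (e · c)) (fun _ _ => Nat.zero_le _) (mem_univ i)).trans (he c)
  have hlarge : ∀ i, D * n < 3 * ∑ c, e i c := fun i => by
    by_contra! hi
    exact hlow i (mem_lowDegreeExponents.2 ⟨hle i, hi⟩)
  have htotal : ∑ i, ∑ c, e i c ≤ D * n := by
    rw [sum_comm]
    calc ∑ c, ∑ i, e i c ≤ ∑ _c : Fin n, D := sum_le_sum fun c _ => he c
      _ = D * n := by simp [mul_comm]
  rw [Fin.sum_univ_three] at htotal
  linarith [hlarge 0, hlarge 1, hlarge 2]

theorem prod_eval_eq_sum_piFinset_support {R σ κ : Type*} [CommSemiring R] [Fintype σ] [Fintype κ]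
    [DecidableEq κ] (P : MvPolynomial σ R) (x : σ → κ → R) :
    ∏ c, P.eval (fun i => x i c) = ∑ p ∈ Fintype.piFinset fun _ : κ => P.support,
      (∏ c, P.coeff (p c)) * ∏ i, ∏ c, x i c ^ p c i := by
  simp_rw [MvPolynomial.eval_eq', prod_univ_sum, prod_mul_distrib]
  exact sum_congr rfl fun p _ => congrArg _ prod_comm

theorem card_le_three_mul_card_lowDegreeExponents_of_prod_eval_eq {F : Type*} [Field F]
    [DecidableEq F] {n D : ℕ}
    {P : MvPolynomial (Fin 3) F} (hP : P.totalDegree ≤ D) {A : Finset (Fin n → F)}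
    (hA : ∀ x : Fin 3 → Fin n → F, (∀ i, x i ∈ A) →
      ∏ c, P.eval (fun i => x i c) = if x 0 = x 1 ∧ x 1 = x 2 then 1 else 0) :
    #A ≤ 3 * #(lowDegreeExponents D n) := by
  classical
  let mon : (Fin n → ℕ) → A → F := fun e x => ∏ c, x.1 c ^ e c
  let V : Submodule F (A → F) := Submodule.span F ((lowDegreeExponents D n).image mon)
  have hmon : ∀ e ∈ lowDegreeExponents D n, mon e ∈ V := fun e he =>
    Submodule.subset_span (mem_coe.2 (mem_image_of_mem mon he))
  have hV : finrank F V ≤ #(lowDegreeExponents D n) :=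
    (finrank_span_finset_le_card _).trans card_image_le
  have hslice := card_le_finrank_add_of_sum_eq_diagonal (X := A) (U := V) (V := V) (W := V)
    (S := Fintype.piFinset fun _ => P.support) (d := 1)
    (f := fun p => (∏ c, P.coeff (p c)) • mon (p · 0)) (g := fun p => mon (p · 1))
    (h := fun p => mon (p · 2)) ?_ (fun _ => one_ne_zero) ?_
  · rw [Fintype.card_coe] at hslice
    omega
  · intro p hp
    have hdeg : ∀ c, ∑ i, p c i ≤ D := fun c => by
      rw [← Finsupp.sum_fintype (p c) (fun _ e => e) fun _ => rfl]
      exact (MvPolynomial.le_totalDegree (Fintype.mem_piFinset.1 hp c)).trans hP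
    obtain ⟨i, hi⟩ := exists_mem_lowDegreeExponents (e := fun i c => p c i) hdeg
    fin_cases i
    · exact .inl (V.smul_mem _ (hmon _ hi))
    · exact .inr (.inl (hmon _ hi))
    · exact .inr (.inr (hmon _ hi))
  · intro x y z
    have hxyz := hA ![x, y, z] (by simp [Fin.forall_fin_succ])
    rw [prod_eval_eq_sum_piFinset_support] at hxyz
    simpa [mon, Fin.prod_univ_three, ← mul_assoc] using hxyz

end LowDegree

section ThreePoints

variable {F : Type*} [Field F] [Fintype F]

theorem prod_one_sub_pow_card_sub_one_eq_ite {κ : Type*} [Fintype κ] [DecidableEq F] (v : κ → F) :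
    ∏ c, (1 - v c ^ (Fintype.card F - 1)) = if v = 0 then 1 else 0 := by
  split_ifs with hv
  · have hq : Fintype.card F - 1 ≠ 0 := Nat.sub_ne_zero_of_lt Fintype.one_lt_card
    simp [hv, hq]
  · obtain ⟨c, hc⟩ := Function.ne_iff.1 hv
    exact prod_eq_zero (mem_univ c)
      (sub_eq_zero.2 (FiniteField.pow_card_sub_one_eq_one _ hc).symm)

theorem card_le_three_mul_card_lowDegreeExponents_of_forall_eq {n : ℕ} {α β : F} (hβ : β ≠ 0)
    {A : Finset (Fin n → F)}
    (hA : ∀ x ∈ A, ∀ y ∈ A, ∀ z ∈ A, α • (y - x) + β • (z - x) = 0 → x = y) :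
    #A ≤ 3 * #(lowDegreeExponents (Fintype.card F - 1) n) := by
  classical
  let P : MvPolynomial (Fin 3) F :=
    1 - (.C α * (.X 1 - .X 0) + .C β * (.X 2 - .X 0)) ^ (Fintype.card F - 1)
  have hdiff : ∀ (γ : F) (i : Fin 3),
      (.C γ * (.X i - .X 0) : MvPolynomial (Fin 3) F).totalDegree ≤ 1 := fun γ i => by
    refine (MvPolynomial.totalDegree_mul _ _).trans ?_
    rw [MvPolynomial.totalDegree_C, zero_add]
    exact (MvPolynomial.totalDegree_sub _ _).trans (by simp)
  have hP : P.totalDegree ≤ Fintype.card F - 1 := by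
    refine (MvPolynomial.totalDegree_sub _ _).trans (max_le (by simp) ?_)
    refine (MvPolynomial.totalDegree_pow _ _).trans (mul_le_of_le_one_right (Nat.zero_le _) ?_)
    exact (MvPolynomial.totalDegree_add _ _).trans (max_le (hdiff α 1) (hdiff β 2))
  refine card_le_three_mul_card_lowDegreeExponents_of_prod_eval_eq hP fun x hx => ?_
  have heval : ∀ c, P.eval (fun i => x i c) =
      1 - (α • (x 1 - x 0) + β • (x 2 - x 0)) c ^ (Fintype.card F - 1) := fun c => by simp [P]
  rw [prod_congr rfl fun c _ => heval c, prod_one_sub_pow_card_sub_one_eq_ite]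
  -- A solution with `x 0 = x 1` is constant because `β ≠ 0`, so the tensor is diagonal on `A`.
  refine if_congr ⟨fun h => ?_, fun h => by simp [h]⟩ rfl rfl
  have h01 := hA _ (hx 0) _ (hx 1) _ (hx 2) h
  rw [h01, sub_self, smul_zero, zero_add] at h
  exact ⟨h01, (sub_eq_zero.1 ((smul_eq_zero.1 h).resolve_left hβ)).symm⟩

variable (F) in
theorem exists_card_le_pow_sub_of_forall_eq :
    ∃ k, 0 < k ∧ ∀ (n : ℕ) (α β : F), β ≠ 0 → ∀ A : Finset (Fin n → F),
      (∀ x ∈ A, ∀ y ∈ A, ∀ z ∈ A, α • (y - x) + β • (z - x) = 0 → x = y) →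
      #A ≤ 3 * Fintype.card F ^ (n - n / k) := by
  have hq : 1 < Fintype.card F := Fintype.one_lt_card
  obtain ⟨k, hk0, hk⟩ := exists_card_lowDegreeExponents_le_pow_sub (Nat.sub_pos_of_lt hq)
  rw [Nat.sub_add_cancel hq.le] at hk
  exact ⟨k, hk0, fun n α β hβ A hA =>
    (card_le_three_mul_card_lowDegreeExponents_of_forall_eq hβ hA).trans
      (Nat.mul_le_mul_left 3 (hk n))⟩

end ThreePoints

section Separation

theorem card_le_card_heavy_fibers_mul_add {V W : Type*} [Fintype V] [Fintype W] [DecidableEq V]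
    [DecidableEq W] (A : Finset (V × W)) (N : ℕ) :
    #A ≤ #{u | N < #{w | (u, w) ∈ A}} * Fintype.card W + N * Fintype.card V := by
  set U : Finset V := {u | N < #{w | (u, w) ∈ A}} with hU
  rw [← card_filter_add_card_filter_not (s := A) fun p => p.1 ∈ U]
  refine add_le_add ?_ ?_
  · rw [← card_univ, ← card_product]
    exact card_le_card fun p hp => mem_product.2 ⟨(mem_filter.1 hp).2, mem_univ _⟩
  · refine card_le_mul_card_image_of_maps_to (f := Prod.fst) (fun _ _ => mem_univ _) N fun u _ => ?_
    by_cases hu : u ∈ U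
    · rw [filter_filter, filter_false_of_mem fun p _ hp => hp.1 (hp.2 ▸ hu)]
      exact Nat.zero_le N
    · have hlight : #{w | (u, w) ∈ A} ≤ N := by simpa [hU] using hu
      refine (card_le_card_of_injOn Prod.snd ?_ ?_).trans hlight
      · rintro ⟨u', w⟩ hp
        obtain ⟨⟨hA, -⟩, rfl⟩ : ((u', w) ∈ A ∧ _) ∧ u' = u := by simpa using hp
        simpa using hA
      · rintro p hp p' hp' hsnd
        exact Prod.ext ((mem_filter.1 hp).2.trans (mem_filter.1 hp').2.symm) hsnd

/-- `A` contains a solution of `∑ i, a i • x i = 0` in which `x i ≠ x j` for every pair `(i, j)` in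
`S`. Solutions with pairwise distinct entries are the case `S = univ.offDiag`. -/
def HasSeparatedSolution {R ι V : Type*} [Semiring R] [Fintype ι] [AddCommMonoid V] [Module R V]
    (a : ι → R) (S : Finset (ι × ι)) (A : Finset V) : Prop :=
  ∃ x : ι → V, (∀ i, x i ∈ A) ∧ ∑ i, a i • x i = 0 ∧ ∀ p ∈ S, x p.1 ≠ x p.2

variable {R ι V W : Type*} [Semiring R] [Fintype ι] [AddCommMonoid V] [Module R V]
  [AddCommMonoid W] [Module R W] {a : ι → R} {S T : Finset (ι × ι)}

theorem HasSeparatedSolution.of_map {A : Finset V} (e : V ≃ₗ[R] W)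
    (h : HasSeparatedSolution a S (A.map e.toEquiv.toEmbedding)) : HasSeparatedSolution a S A := by
  obtain ⟨y, hyA, hy0, hyS⟩ := h
  refine ⟨fun i => e.symm (y i), fun i => ?_, ?_, fun p hp => e.symm.injective.ne (hyS p hp)⟩
  · obtain ⟨x, hx, hxy⟩ := mem_map.1 (hyA i)
    simpa [← hxy] using hx
  · simp_rw [← map_smul, ← map_sum, hy0, map_zero]

theorem HasSeparatedSolution.union_of_prodMk_mem [DecidableEq ι] {A : Finset (V × W)}
    {B : Finset V} {w : ι → W} (hB : HasSeparatedSolution a S B) (hw : ∑ i, a i • w i = 0)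
    (hwT : ∀ p ∈ T, w p.1 ≠ w p.2) (hA : ∀ u ∈ B, ∀ i, (u, w i) ∈ A) :
    HasSeparatedSolution a (S ∪ T) A := by
  obtain ⟨u, huB, hu0, huS⟩ := hB
  refine ⟨fun i => (u i, w i), fun i => hA _ (huB i) i, ?_, fun p hp heq => ?_⟩
  · ext <;> simp [Prod.fst_sum, Prod.snd_sum, hu0, hw]
  · rw [Prod.mk.injEq] at heq
    exact (mem_union.1 hp).elim (huS p · heq.1) (hwT p · heq.2)

/-- Fibres over `u : V` with more than `N` elements contain a `T`-separated solution; by pigeonhole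
it is the same one for many `u`, and these `u` admit an `S`-separated solution. -/
theorem card_le_of_not_hasSeparatedSolution_union [DecidableEq ι] [Fintype V] [Fintype W]
    {A : Finset (V × W)} (hA : ¬ HasSeparatedSolution a (S ∪ T) A) {M N : ℕ}
    (hM : ∀ B : Finset V, ¬ HasSeparatedSolution a S B → #B ≤ M)
    (hN : ∀ B : Finset W, ¬ HasSeparatedSolution a T B → #B ≤ N) :
    #A ≤ M * Fintype.card W ^ Fintype.card ι * Fintype.card W + N * Fintype.card V := by
  classical
  set U : Finset V := {u | N < #{w | (u, w) ∈ A}}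
  have hsol : ∀ u, ∃ w : ι → W, u ∈ U →
      (∀ i, (u, w i) ∈ A) ∧ ∑ i, a i • w i = 0 ∧ ∀ p ∈ T, w p.1 ≠ w p.2 := fun u => by
    by_cases hu : u ∈ U
    · have hheavy : N < #{w | (u, w) ∈ A} := (mem_filter.1 hu).2
      obtain ⟨w, hwA, hw⟩ := not_imp_comm.1 (hN _) hheavy.not_ge
      exact ⟨w, fun _ => ⟨fun i => (mem_filter.1 (hwA i)).2, hw⟩⟩
    · exact ⟨0, fun h => absurd h hu⟩
  choose sol hsol using hsol
  have hclass : ∀ w, #{u ∈ U | sol u = w} ≤ M := fun w => by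
    by_contra! hlarge
    obtain ⟨u₀, hu₀⟩ := card_pos.1 (Nat.zero_lt_of_lt hlarge)
    obtain ⟨hu₀U, rfl⟩ := mem_filter.1 hu₀
    refine hA ((not_imp_comm.1 (hM _) hlarge.not_ge).union_of_prodMk_mem (hsol u₀ hu₀U).2.1
      (hsol u₀ hu₀U).2.2 fun u hu i => ?_)
    obtain ⟨huU, hu⟩ := mem_filter.1 hu
    exact hu ▸ (hsol u huU).1 i
  have hUcard : #U ≤ M * Fintype.card W ^ Fintype.card ι := by
    rw [← Fintype.card_fun, ← card_univ]
    exact card_le_mul_card_image_of_maps_to (fun _ _ => mem_univ _) M fun w _ => hclass w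
  exact (card_le_card_heavy_fibers_mul_add A N).trans (by gcongr)

end Separation

theorem exists_rpow_le_mul_pow_div {q k : ℕ} (hq : 1 < q) (hk : 0 < k) (s : ℝ) :
    ∃ C : ℝ, ∀ n : ℕ, (n : ℝ) ^ s ≤ C * (q : ℝ) ^ (n / k) := by
  have hq1 : (1 : ℝ) < q := by exact_mod_cast hq
  have hq0 : (0 : ℝ) < q := one_pos.trans hq1
  have hk' : (0 : ℝ) < k := by exact_mod_cast hk
  have hlittleO := (isLittleO_rpow_exp_pos_mul_atTop s
    (div_pos (Real.log_pos hq1) hk')).comp_tendsto tendsto_natCast_atTop_atTop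
  obtain ⟨C, hC⟩ := (Asymptotics.isBigO_nat_atTop_iff fun n hn =>
    absurd hn (Real.exp_ne_zero _)).1 hlittleO.isBigO
  refine ⟨max C 0 * q, fun n => ?_⟩
  have hexp : Real.exp (Real.log q / k * n) ≤ (q : ℝ) ^ (n / k + 1) := by
    rw [← Real.rpow_natCast, Real.rpow_def_of_pos hq0, Real.exp_le_exp, div_mul_eq_mul_div,
      mul_div_assoc]
    gcongr
    rw [div_le_iff₀' hk']
    exact_mod_cast (Nat.lt_mul_div_succ n hk).le
  calc (n : ℝ) ^ s ≤ C * Real.exp (Real.log q / k * n) := by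
        simpa [abs_of_nonneg, Real.rpow_nonneg] using hC n
    _ ≤ max C 0 * (q : ℝ) ^ (n / k + 1) := by gcongr; exact le_max_left C 0
    _ = max C 0 * q * (q : ℝ) ^ (n / k) := by ring

/-- Sets without an `S`-separated solution are exponentially small: for some `k` and `C` they have
at most `C * |R| ^ (n - ⌊n / k⌋)` elements in `R ^ n`. -/
def HasPowerSaving {R ι : Type*} [Semiring R] [Fintype R] [Fintype ι] (a : ι → R)
    (S : Finset (ι × ι)) : Prop :=
  ∃ k, 0 < k ∧ ∃ C : ℕ, ∀ (n : ℕ) (A : Finset (Fin n → R)), ¬ HasSeparatedSolution a S A →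
    #A ≤ C * Fintype.card R ^ (n - n / k)

namespace HasPowerSaving

variable {R ι : Type*} [Semiring R] [Fintype R] [Fintype ι] {a : ι → R}

theorem empty (ha0 : ∑ i, a i = 0) : HasPowerSaving a ∅ := by
  refine ⟨1, one_pos, 0, fun n A hA => ?_⟩
  suffices A = ∅ by simp [this]
  refine eq_empty_of_forall_notMem fun x hx => hA ⟨fun _ => x, fun _ => hx, ?_, by simp⟩
  rw [← sum_smul, ha0, zero_smul]

/-- With `r` variables, split `R ^ n = R ^ m × R ^ d` where `d = ⌊n / (k (r + 1) + 1)⌋`: the saving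
`q ^ (m / k) ≥ q ^ (d (r + 1))` in the first factor pays for the pigeonhole over the `q ^ (d r)`
tuples in the second. -/
theorem union [DecidableEq ι] {S T : Finset (ι × ι)} (hS : HasPowerSaving a S)
    (hT : HasPowerSaving a T) : HasPowerSaving a (S ∪ T) := by
  obtain ⟨k, hk0, C, hC⟩ := hS
  obtain ⟨l, hl0, D, hD⟩ := hT
  set q := Fintype.card R
  have hq1 : 1 ≤ q := Fintype.card_pos
  set r := Fintype.card ι
  refine ⟨(k * (r + 1) + 1) * l, by positivity, C + D, fun n A hA => ?_⟩
  rw [← Nat.div_div_eq_div_mul]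
  obtain ⟨d, hd⟩ : ∃ d, d = n / (k * (r + 1) + 1) := ⟨_, rfl⟩
  rw [← hd]
  have hdn : k * (d * (r + 1)) + d ≤ n := by
    calc k * (d * (r + 1)) + d = d * (k * (r + 1) + 1) := by ring
      _ ≤ n := hd ▸ Nat.div_mul_le_self n _
  clear hd
  obtain ⟨m, rfl⟩ : ∃ m, n = m + d := ⟨n - d, by omega⟩
  have hm : d * r + d ≤ m / k := by
    rw [Nat.le_div_iff_mul_le hk0, ← mul_add_one, mul_comm]
    omega
  have hmk : m / k ≤ m := Nat.div_le_self m k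
  have hdl : d / l ≤ d := Nat.div_le_self d l
  let e : (Fin (m + d) → R) ≃ₗ[R] (Fin m → R) × (Fin d → R) :=
    (LinearEquiv.funCongrLeft R R finSumFinEquiv).trans
      (LinearEquiv.sumArrowLequivProdArrow (Fin m) (Fin d) R R)
  have hcard := card_le_of_not_hasSeparatedSolution_union (mt (.of_map e) hA) (hC m) (hD d)
  simp only [card_map, Fintype.card_fun, Fintype.card_fin, ← pow_mul] at hcard
  calc #A ≤ C * q ^ (m - m / k) * q ^ (d * r) * q ^ d + D * q ^ (d - d / l) * q ^ m := hcard
    _ = C * q ^ (m - m / k + d * r + d) + D * q ^ (d - d / l + m) := by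
        simp only [pow_add, mul_assoc]
    _ ≤ C * q ^ (m + d - d / l) + D * q ^ (m + d - d / l) := by gcongr <;> omega
    _ = (C + D) * q ^ (m + d - d / l) := (add_mul _ _ _).symm

theorem exists_card_le_div_rpow [Nontrivial R] {S : Finset (ι × ι)} (h : HasPowerSaving a S)
    (s : ℝ) :
    ∃ C : ℝ, ∀ n : ℕ, 0 < n → ∀ A : Finset (Fin n → R), ¬ HasSeparatedSolution a S A →
      (#A : ℝ) ≤ C * (Fintype.card R : ℝ) ^ n / (n : ℝ) ^ s := by
  obtain ⟨k, hk0, C, hC⟩ := h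
  obtain ⟨B, hB⟩ := exists_rpow_le_mul_pow_div (Fintype.one_lt_card (α := R)) hk0 s
  refine ⟨C * B, fun n hn A hA => ?_⟩
  have hcard : (#A : ℝ) ≤ C * (Fintype.card R : ℝ) ^ (n - n / k) := by exact_mod_cast hC n A hA
  rw [le_div_iff₀ (Real.rpow_pos_of_pos (Nat.cast_pos.2 hn) s)]
  calc (#A : ℝ) * (n : ℝ) ^ s
      ≤ C * (Fintype.card R : ℝ) ^ (n - n / k) * (B * (Fintype.card R : ℝ) ^ (n / k)) := by
        gcongr
        exact hB n
    _ = C * B * (Fintype.card R : ℝ) ^ (n - n / k + n / k) := by ring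
    _ = C * B * (Fintype.card R : ℝ) ^ n := by rw [Nat.sub_add_cancel (Nat.div_le_self n k)]

variable {F : Type*} [Field F] [Fintype F] {a : ι → F}

/-- Give every variable except `j` and `l` the same value. -/
theorem singleton (ha0 : ∑ i, a i = 0) {i j l : ι} (hij : i ≠ j) (hli : l ≠ i) (hlj : l ≠ j)
    (hl : a l ≠ 0) : HasPowerSaving a {(i, j)} := by
  classical
  obtain ⟨k, hk0, hk⟩ := exists_card_le_pow_sub_of_forall_eq F
  refine ⟨k, hk0, 3, fun n A hA => hk n (a j) (a l) hl A fun x hx y hy z hz hxyz => ?_⟩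
  by_contra hxy
  let u : ι → Fin n → F := Function.update (Function.update (fun _ => x) j y) l z
  have hu : ∀ t, u t - x = (if t = j then y - x else 0) + if t = l then z - x else 0 := fun t => by
    rcases eq_or_ne t l with rfl | htl
    · simp [u, hlj]
    · rcases eq_or_ne t j with rfl | htj <;> simp [u, *]
  refine hA ⟨u, fun t => ?_, ?_, ?_⟩
  · rcases eq_or_ne t l with rfl | htl
    · simp [u, hz]
    · rcases eq_or_ne t j with rfl | htj <;> simp [u, *]
  · calc ∑ t, a t • u t = ∑ t, a t • (u t - x) := by
          simp_rw [smul_sub, sum_sub_distrib, ← sum_smul, ha0, zero_smul, sub_zero]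
      _ = a j • (y - x) + a l • (z - x) := by
          simp [hu, smul_add, sum_add_distrib, smul_ite]
      _ = 0 := hxyz
  · simpa [u, hij, hli.symm, hlj.symm] using hxy

theorem offDiag (ha0 : ∑ i, a i = 0) (ha : 2 < (Function.support a).ncard) :
    HasPowerSaving a (univ : Finset ι).offDiag := by
  classical
  suffices ∀ S : Finset (ι × ι), (∀ p ∈ S, p.1 ≠ p.2) → HasPowerSaving a S from
    this _ fun p hp => (mem_offDiag.1 hp).2.2
  intro S hS
  induction S using Finset.induction_on with
  | empty => exact empty ha0
  | insert p S _ ih =>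
    have hp : p.1 ≠ p.2 := hS p (mem_insert_self p S)
    obtain ⟨l, hl, hlp⟩ := Set.exists_mem_notMem_of_ncard_lt_ncard
      ((Set.ncard_pair hp).trans_lt ha)
    rw [Set.mem_insert_iff, Set.mem_singleton_iff, not_or] at hlp
    rw [insert_eq]
    exact (singleton ha0 hp hlp.1 hlp.2 hl).union
      (ih fun p' hp' => hS p' (mem_insert_of_mem hp'))

end HasPowerSaving

theorem improved_liu_spencer_general (F ι : Type*) [Field F] [Fintype F] [Fintype ι] (s : ℝ) :
    ∃ C : ℝ, 0 < C ∧ ∀ n : ℕ, 1 ≤ n → ∀ a : ι → F, 2 < (Function.support a).ncard →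
      ∑ i, a i = 0 → ∀ A : Finset (Fin n → F),
        (¬ ∃ x : ι → Fin n → F, (∀ i, x i ∈ A) ∧ Function.Injective x ∧ ∑ i, a i • x i = 0) →
        (#A : ℝ) ≤ C * (Fintype.card F : ℝ) ^ n / (n : ℝ) ^ s := by
  classical
  have hbound : ∀ a : ι → F, ∃ C : ℝ, 2 < (Function.support a).ncard → ∑ i, a i = 0 →
      ∀ n : ℕ, 0 < n → ∀ A : Finset (Fin n → F), ¬ HasSeparatedSolution a univ.offDiag A →
      (#A : ℝ) ≤ C * (Fintype.card F : ℝ) ^ n / (n : ℝ) ^ s := fun a => by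
    by_cases ha : 2 < (Function.support a).ncard ∧ ∑ i, a i = 0
    · obtain ⟨C, hC⟩ := (HasPowerSaving.offDiag ha.2 ha.1).exists_card_le_div_rpow s
      exact ⟨C, fun _ _ => hC⟩
    · exact ⟨0, fun h h0 => absurd ⟨h, h0⟩ ha⟩
  choose C hC using hbound
  obtain ⟨B, hB⟩ := (Set.finite_range C).bddAbove
  refine ⟨max B 1, by positivity, fun n hn a ha ha0 A hA => ?_⟩
  have hsol : ¬ HasSeparatedSolution a univ.offDiag A := fun ⟨x, hxA, hx0, hx⟩ =>
    hA ⟨x, hxA, fun i j hij => by_contra fun hne => hx (i, j) (by simpa using hne) hij, hx0⟩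
  refine (hC a ha ha0 n hn A hsol).trans ?_
  gcongr
  exact (hB ⟨a, rfl⟩).trans (le_max_left B 1)

theorem improved_liu_spencer :
    ∃ E : ℕ → ℝ, (∀ r, 0 ≤ E r) ∧
      ∃ c : ℝ, 0 < c ∧ ∃ r₀ : ℕ,
        (∀ r : ℕ, r₀ ≤ r → c * Real.log r ≤ E r) ∧
        ∀ (F : Type) [Field F] [Fintype F] (r : ℕ), 3 ≤ r →
          ∃ C : ℝ, 0 < C ∧
            ∀ (n : ℕ), 1 ≤ n →
              ∀ (a : Fin r → F), (∀ i, a i ≠ 0) → (∑ i, a i) = 0 →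
                ∀ A : Finset (Fin n → F),
                  (¬ ∃ x : Fin r → Fin n → F,
                      (∀ i, x i ∈ A) ∧ Function.Injective x ∧ ∑ i, a i • x i = 0) →
                  (A.card : ℝ) ≤
                    C * (Fintype.card F : ℝ) ^ n / (n : ℝ) ^ ((r : ℝ) - 2 + E r) := by
  refine ⟨fun r => r, fun r => r.cast_nonneg, 1, one_pos, 0,
    fun r _ => by simpa using Real.log_le_self r.cast_nonneg, fun F _ _ r hr => ?_⟩
  obtain ⟨C, hC0, hC⟩ := improved_liu_spencer_general F (Fin r) (r - 2 + r)
  refine ⟨C, hC0, fun n hn a ha => hC n hn a ?_⟩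
  rwa [Function.support_eq_univ ha, Set.ncard_univ, Nat.card_fin]
end

section
/- Let G be an abelian group, let A ⊆ G be a finite nonempty set, let A′ ⊆ A be nonempty, let θ ∈ (0,1], and set S := Sym_θ(A′ + A). Then θ·|A′ + A|·|S|·|A| ≤ |A′ + A + A|² · max_{x ∈ G} #{(p, s) ∈ A × S : p + s = x}. -/
open Pointwise

/-- The symmetry set of `A` at threshold `η`: those `x` with `|A ∩ (x + A)| ≥ η|A|`. -/
noncomputable def symmSet {G : Type*} [AddCommGroup G] [DecidableEq G]
    (A : Finset G) (η : ℝ) : Finset G :=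
  (A - A).filter fun x => η * A.card ≤ ((A ∩ A.image (x + ·)).card : ℝ)

/-!
Averaging over `b ∈ B` shows that some translate `S + b` of a set `S ⊆ Sym_θ(B)` meets `B` in at
least `θ|S|` points; let `T ⊆ S` be the set of `s` with `s + b ∈ B`. Then `A + T` has a translate
inside `A + B`, so by pigeonhole some element of `A + T` has at least `|A||T| / |A + B|`
representations as a sum of an element of `A` and an element of `T`.
-/

section DoubleCounting

open Finset

lemma exists_mem_mul_card_le_card_bipartiteBelow {α β R : Type*} [CommSemiring R] [LinearOrder R]
    [IsStrictOrderedRing R] (r : α → β → Prop) [∀ a b, Decidable (r a b)] {s : Finset α}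
    {t : Finset β} {θ : R} (ht : t.Nonempty)
    (hr : ∀ a ∈ s, θ * #t ≤ #(t.bipartiteAbove r a)) :
    ∃ b ∈ t, θ * #s ≤ #(s.bipartiteBelow r b) := by
  by_contra! hlt
  have h : #s • (θ * #t) < #t • (θ * #s) :=
    card_nsmul_lt_card_nsmul_of_le_of_lt r ht hr hlt
  refine h.ne ?_
  simp only [nsmul_eq_mul]
  ring

lemma card_inter_image_of_injOn {α β : Type*} [DecidableEq β] {f : α → β} {s : Finset α}
    (hf : Set.InjOn f s) (t : Finset β) : #(t ∩ s.image f) = #{a ∈ s | f a ∈ t} := by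
  rw [inter_comm, ← filter_mem_eq_inter, filter_image,
    card_image_of_injOn (hf.mono <| coe_subset.2 <| filter_subset _ _)]

end DoubleCounting

section Convolution

open Finset

variable {G : Type*} [AddGroup G] [DecidableEq G]

lemma addConvolution_mono_right (A : Finset G) {S T : Finset G} (hTS : T ⊆ S) (x : G) :
    A.addConvolution T x ≤ A.addConvolution S x :=
  card_le_card (filter_subset_filter _ (product_subset_product_right hTS))

lemma sum_addConvolution (A B : Finset G) : ∑ x ∈ A + B, A.addConvolution B x = #A * #B := by
  rw [← card_product]
  refine (card_eq_sum_card_fiberwise fun p hp => ?_).symm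
  obtain ⟨ha, hb⟩ := mem_product.1 hp
  exact add_mem_add ha hb

lemma exists_card_mul_card_le_card_add_mul_addConvolution (A B : Finset G) :
    ∃ x, #A * #B ≤ #(A + B) * A.addConvolution B x := by
  obtain hAB | hAB := (A + B).eq_empty_or_nonempty
  · exact ⟨0, by simp [← sum_addConvolution, hAB]⟩
  · have hsum : ∑ _x ∈ A + B, #A * #B ≤ ∑ x ∈ A + B, #(A + B) * A.addConvolution B x := by
      rw [sum_const, smul_eq_mul, ← mul_sum, sum_addConvolution]
    obtain ⟨x, -, hx⟩ := exists_le_of_sum_le hAB hsum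
    exact ⟨x, hx⟩

end Convolution

section SymmSet

open Finset

variable {G : Type*} [AddCommGroup G] [DecidableEq G] {B S : Finset G} {θ : ℝ}

lemma exists_mem_mul_card_le_card_filter_add_mem (hB : B.Nonempty) (hS : S ⊆ symmSet B θ) :
    ∃ b ∈ B, θ * #S ≤ #{s ∈ S | s + b ∈ B} := by
  refine exists_mem_mul_card_le_card_bipartiteBelow (fun s b => s + b ∈ B) hB fun s hs => ?_
  rw [bipartiteAbove, ← card_inter_image_of_injOn (add_right_injective s).injOn]
  exact (mem_filter.1 (hS hs)).2

theorem symmetry_set_convolution_inequality_general (A : Finset G) (hB : B.Nonempty)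
    (hS : S ⊆ symmSet B θ) :
    ∃ x, θ * #S * #A ≤ #(B + A) * A.addConvolution S x := by
  obtain ⟨b, -, hb⟩ := exists_mem_mul_card_le_card_filter_add_mem hB hS
  set T := {s ∈ S | s + b ∈ B}
  have hTB : T + {b} ⊆ B := by
    simp only [add_subset_iff, mem_singleton, forall_eq]
    exact fun s hs => (mem_filter.1 hs).2
  have hAT : #(A + T) ≤ #(B + A) := calc
    #(A + T) = #(A + (T + {b})) := by rw [← add_assoc, card_add_singleton]
    _ ≤ #(A + B) := card_le_card (add_subset_add_left hTB)
    _ = #(B + A) := by rw [add_comm]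
  obtain ⟨x, hx⟩ := exists_card_mul_card_le_card_add_mul_addConvolution A T
  refine ⟨x, ?_⟩
  calc θ * #S * #A ≤ #T * #A := by gcongr
    _ = #A * #T := mul_comm _ _
    _ ≤ #(A + T) * A.addConvolution T x := mod_cast hx
    _ ≤ #(B + A) * A.addConvolution S x := by
      gcongr
      exact addConvolution_mono_right A (filter_subset _ _) x

end SymmSet

theorem symmetry_set_convolution_inequality
    (G : Type) [AddCommGroup G] [DecidableEq G] (A A' : Finset G) (θ : ℝ)
    (hA : A.Nonempty) (hA'sub : A' ⊆ A) (hA' : A'.Nonempty)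
    (hθ0 : 0 < θ) (hθ1 : θ ≤ 1) :
    ∃ x : G,
      θ * ((A' + A).card : ℝ) * ((symmSet (A' + A) θ).card : ℝ) * (A.card : ℝ) ≤
        (((A' + A + A).card : ℝ)) ^ 2 *
          (((A ×ˢ symmSet (A' + A) θ).filter fun p => p.1 + p.2 = x).card : ℝ) := by
  obtain ⟨x, hx⟩ := symmetry_set_convolution_inequality_general A (hA'.add hA) subset_rfl
  refine ⟨x, ?_⟩
  have hcard : (A' + A).card ≤ (A' + A + A).card := Finset.card_le_card_add_right hA
  rw [Finset.card_add_eq]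
  calc _ = (A' + A).card * (θ * (symmSet (A' + A) θ).card * A.card) := by ring
    _ ≤ (A' + A + A).card * ((A' + A + A).card * A.addConvolution (symmSet (A' + A) θ) x) := by
      gcongr
    _ = _ := by ring
end

section
/- There is an absolute constant C > 0 such that the following holds. Let G be an abelian group, let A ⊆ G be a finite nonempty set, let K ≥ 1 be a real number with |A + A| ≤ K|A|, and let ε ∈ (0,1). Then there is a nonempty subset A′ ⊆ A such that |Sym_{1−ε}(A′ + A)| ≥ exp(−K^{C/log(1/(1−ε))}·log K)·|A|. -/
open Pointwise

/-!
The argument works in any group. Let `x` be a popular quotient of `B`, in the sense that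
`B' = B ∩ xB` is not much smaller than the average of such intersections over `B / B`. Since
`B'S ⊆ BS ∩ x(BS)`, either `x` is an `η`-symmetry of `BS`, or `B'S` is smaller than `BS` by a factor
`η`. Starting from `B = S = A`, the second alternative can occur only `n ≤ log K / log (1 / η)`
times, because `|BS| ≥ |S|` throughout; each occurrence roughly squares the density of `B`, so the
final density is `K ^ (-O(2 ^ n))`. Doubling below `3 / 2` is treated separately: there `AA` is a
coset of a subgroup, invariant under all of `A / A`, which gives a bound without loss as `K → 1`.
-/

section RealBounds

open Real

variable {b K L η : ℝ} {n : ℕ}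

lemma mul_pow_two_pow_sub_one_le {b' c : ℝ} (hc : 0 ≤ c) (h : c * b ^ 2 ≤ b') (n : ℕ) :
    b * (c * b) ^ (2 ^ (n + 1) - 1) ≤ b' * (c * b') ^ (2 ^ n - 1) := by
  have hexp : 2 ^ (n + 1) - 1 = 1 + 2 * (2 ^ n - 1) := by
    have := Nat.one_le_two_pow (n := n)
    lia
  calc b * (c * b) ^ (2 ^ (n + 1) - 1)
      = c * b ^ 2 * (c * (c * b ^ 2)) ^ (2 ^ n - 1) := by rw [hexp, pow_add, pow_mul]; ring
    _ ≤ b' * (c * b') ^ (2 ^ n - 1) := by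
        have hb' : 0 ≤ b' := le_trans (by positivity) h
        gcongr

lemma pow_mul_le_one_of_log_div_le (hK : 0 < K) (hη₀ : 0 < η) (hη₁ : η < 1)
    (hn : log K / log (1 / η) ≤ n) : η ^ n * K ≤ 1 := by
  have hL : 0 < log (1 / η) := log_pos (one_lt_one_div hη₀ hη₁)
  rw [div_le_iff₀ hL, one_div, log_inv] at hn
  rw [← log_nonpos_iff (by positivity), log_mul (by positivity) hK.ne', log_pow]
  linarith

lemma rpow_log_div_comm (hb : 0 < b) (hK : 0 < K) : K ^ (log b / L) = b ^ (log K / L) := by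
  rw [rpow_def_of_pos hK, rpow_def_of_pos hb]
  ring_nf

-- The cube is the source of the constant `log 8`: it dominates the true exponent `5 * m + 1`, and
-- `(2 ^ n) ^ 3 = 8 ^ n`.
lemma inv_pow_succ_cube_le (hK : 3 / 2 ≤ K) (m : ℕ) :
    (K ^ (m + 1) ^ 3)⁻¹ ≤ 2 / 3 * (1 / (3 * K ^ 2)) ^ m := by
  have hK0 : 0 < K := by linarith
  have hK3 : 3 ≤ K ^ 3 := by
    calc (3 : ℝ) ≤ (3 / 2) ^ 3 := by norm_num
      _ ≤ K ^ 3 := by gcongr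
  calc (K ^ (m + 1) ^ 3)⁻¹ ≤ (K ^ (1 + 5 * m))⁻¹ := by
        gcongr
        · linarith
        · nlinarith [sq_nonneg m, mul_nonneg m.zero_le (sq_nonneg m)]
    _ = K⁻¹ * (1 / (K ^ 3 * K ^ 2)) ^ m := by
        rw [pow_add, pow_one, pow_mul, mul_inv, ← inv_pow, ← pow_add, one_div]
    _ ≤ 2 / 3 * (1 / (3 * K ^ 2)) ^ m := by
        gcongr
        rw [inv_le_comm₀ hK0 (by norm_num)]
        linarith

lemma exp_neg_rpow_mul_log_le (hK : 3 / 2 ≤ K) (hn : n ≤ log K / L) :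
    exp (-(K ^ (log 8 / L) * log K)) ≤ 2 / 3 * (1 / (3 * K ^ 2)) ^ (2 ^ n - 1) := by
  have hK₁ : 1 ≤ K := by linarith
  have hlog : 0 ≤ log K := log_nonneg hK₁
  have hexponent : ((2 ^ n - 1 + 1) ^ 3 : ℕ) ≤ K ^ (log 8 / L) := by
    rw [Nat.sub_add_cancel Nat.one_le_two_pow, pow_right_comm,
      rpow_log_div_comm (by norm_num) (by linarith)]
    calc (((2 ^ 3) ^ n : ℕ) : ℝ) = 8 ^ (n : ℝ) := by norm_num
      _ ≤ 8 ^ (log K / L) := rpow_le_rpow_of_exponent_le (by norm_num) hn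
  calc exp (-(K ^ (log 8 / L) * log K))
      ≤ exp (-(((2 ^ n - 1 + 1) ^ 3 : ℕ) * log K)) := by gcongr
    _ = (K ^ (2 ^ n - 1 + 1) ^ 3)⁻¹ := by rw [exp_neg, exp_nat_mul, exp_log (by linarith)]
    _ ≤ 2 / 3 * (1 / (3 * K ^ 2)) ^ (2 ^ n - 1) := inv_pow_succ_cube_le hK _

end RealBounds

section SymmetrySets

open Finset

lemma sum_le_card_filter_le_mul_add {ι : Type*} {s : Finset ι} {f : ι → ℝ} {m t : ℝ}
    (ht : 0 ≤ t) (hm : ∀ i ∈ s, f i ≤ m) :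
    ∑ i ∈ s, f i ≤ #{i ∈ s | t ≤ f i} * m + #s * t := by
  have hlarge : ∑ i ∈ s with t ≤ f i, f i ≤ #{i ∈ s | t ≤ f i} * m := by
    simpa only [nsmul_eq_mul] using sum_le_card_nsmul _ f m fun i hi ↦ hm i (mem_filter.1 hi).1
  have hsmall : ∑ i ∈ s with ¬ t ≤ f i, f i ≤ #{i ∈ s | ¬ t ≤ f i} * t := by
    simpa only [nsmul_eq_mul] using
      sum_le_card_nsmul _ f t fun i hi ↦ (not_le.1 (mem_filter.1 hi).2).le
  calc ∑ i ∈ s, f i = ∑ i ∈ s with t ≤ f i, f i + ∑ i ∈ s with ¬ t ≤ f i, f i :=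
        (sum_filter_add_sum_filter_not s _ f).symm
    _ ≤ #{i ∈ s | t ≤ f i} * m + #{i ∈ s | ¬ t ≤ f i} * t := add_le_add hlarge hsmall
    _ ≤ #{i ∈ s | t ≤ f i} * m + #s * t := by gcongr; exact filter_subset _ _

variable {G : Type*} [Group G] [DecidableEq G]

/-- The (left) symmetry set of a finite subset of a group at threshold `η`, i.e. the multiplicative
and not necessarily commutative counterpart of `symmSet`. -/
noncomputable def mulSymmSet (A : Finset G) (η : ℝ) : Finset G :=
  {x ∈ A / A | η * #A ≤ #(A ∩ x • A)}

variable {A B S : Finset G} {K D η θ : ℝ}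

lemma mem_mulSymmSet (hη : 0 < η) (hA : A.Nonempty) {x : G} :
    x ∈ mulSymmSet A η ↔ η * #A ≤ #(A ∩ x • A) := by
  refine ⟨fun hx ↦ (mem_filter.1 hx).2, fun hx ↦ mem_filter.2 ⟨?_, hx⟩⟩
  have hpos : 0 < η * #A := mul_pos hη (mod_cast hA.card_pos)
  rw [div_eq_mul_inv, ← convolution_pos, ← card_inter_smul]
  exact_mod_cast hpos.trans_le hx

lemma inter_smul_mul_subset (B S : Finset G) (x : G) :
    (B ∩ x • B) * S ⊆ (B * S) ∩ x • (B * S) := by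
  simpa only [smul_mul_assoc] using inter_mul_subset (s₁ := B) (s₂ := x • B) (t := S)

lemma sum_card_inter_smul (B : Finset G) : ∑ x ∈ B / B, #(B ∩ x • B) = #B ^ 2 := by
  have hmaps : Set.MapsTo (fun p : G × G ↦ p.1 / p.2) ↑(B ×ˢ B) ↑(B / B) :=
    fun p hp ↦ div_mem_div (mem_product.1 hp).1 (mem_product.1 hp).2
  rw [sq, ← card_product, card_eq_sum_card_fiberwise hmaps]
  exact sum_congr rfl fun x _ ↦ by rw [card_inter_smul, card_div_eq]

lemma le_card_popular_quotients (hθ : 0 ≤ θ) (B : Finset G) :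
    (1 - θ) * #B ≤ #{x ∈ B / B | θ * #B ^ 2 / #(B / B) ≤ #(B ∩ x • B)} := by
  obtain rfl | hB := B.eq_empty_or_nonempty
  · simp
  have hB₀ : (0 : ℝ) < #B := mod_cast hB.card_pos
  have hBB₀ : (0 : ℝ) < #(B / B) := mod_cast (hB.div hB).card_pos
  have havg := sum_le_card_filter_le_mul_add (s := B / B) (f := fun x ↦ (#(B ∩ x • B) : ℝ))
    (m := #B) (t := θ * #B ^ 2 / #(B / B)) (by positivity)
    fun x _ ↦ mod_cast card_le_card inter_subset_left
  rw [← Nat.cast_sum, sum_card_inter_smul, Nat.cast_pow, mul_div_cancel₀ _ hBB₀.ne'] at havg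
  exact le_of_mul_le_mul_right (by linarith) hB₀

lemma le_card_mulSymmSet_or_exists_subset (hB : B.Nonempty) (hS : S.Nonempty) (hθ : 0 < θ)
    (hη : 0 < η) :
    (1 - θ) * #B ≤ #(mulSymmSet (B * S) η) ∨
      ∃ B' ⊆ B, B'.Nonempty ∧ θ * #B ^ 2 / #(B / B) ≤ #B' ∧ #(B' * S) < η * #(B * S) := by
  rw [or_iff_not_imp_right]
  intro hno
  push Not at hno
  have hB₀ : (0 : ℝ) < #B := mod_cast hB.card_pos
  have hBB₀ : (0 : ℝ) < #(B / B) := mod_cast (hB.div hB).card_pos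
  refine (le_card_popular_quotients hθ.le B).trans (Nat.cast_le.2 (card_le_card fun x hx ↦ ?_))
  obtain ⟨-, hpopular⟩ := mem_filter.1 hx
  have hne : (B ∩ x • B).Nonempty := by
    have hcard : (0 : ℝ) < #(B ∩ x • B) :=
      (div_pos (mul_pos hθ (pow_pos hB₀ 2)) hBB₀).trans_le hpopular
    exact card_pos.1 (mod_cast hcard)
  rw [mem_mulSymmSet hη (hB.mul hS)]
  calc η * #(B * S) ≤ #((B ∩ x • B) * S) := hno _ inter_subset_left hne hpopular
    _ ≤ #((B * S) ∩ x • (B * S)) := mod_cast card_le_card (inter_smul_mul_subset B S x)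

lemma exists_subset_le_card_mulSymmSet (hS : S.Nonempty) (hθ₀ : 0 < θ) (hθ₁ : θ ≤ 1) (hη : 0 < η)
    (n : ℕ) (hB : B.Nonempty) (hD : #(B / B) ≤ D) (hBS : η ^ (n + 1) * #(B * S) ≤ #S) :
    ∃ A ⊆ B, A.Nonempty ∧
      (1 - θ) * (#B * (θ / D * #B) ^ (2 ^ n - 1)) ≤ #(mulSymmSet (A * S) η) := by
  induction n generalizing B with
  | zero =>
    obtain hlarge | ⟨B', -, hB', -, hsum⟩ := le_card_mulSymmSet_or_exists_subset hB hS hθ₀ hη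
    · exact ⟨B, Subset.rfl, hB, by simpa using hlarge⟩
    · have hS_le : (#S : ℝ) ≤ #(B' * S) := mod_cast card_le_card_mul_left hB'
      rw [zero_add, pow_one] at hBS
      exact absurd (hsum.trans_le hBS) hS_le.not_gt
  | succ n ih =>
    have hBB₀ : (0 : ℝ) < #(B / B) := mod_cast (hB.div hB).card_pos
    have hD₀ : 0 < D := hBB₀.trans_le hD
    obtain hlarge | ⟨B', hB'B, hB', hcard, hsum⟩ :=
      le_card_mulSymmSet_or_exists_subset hB hS hθ₀ hη
    · have hBD : (#B : ℝ) ≤ D := (Nat.cast_le.2 (card_le_card_div_right hB)).trans hD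
      have hdensity : θ / D * #B ≤ 1 := by
        rw [div_mul_eq_mul_div, div_le_one hD₀]
        exact (mul_le_of_le_one_left (Nat.cast_nonneg _) hθ₁).trans hBD
      refine ⟨B, Subset.rfl, hB, le_trans ?_ hlarge⟩
      refine mul_le_mul_of_nonneg_left ?_ (sub_nonneg.2 hθ₁)
      exact mul_le_of_le_one_right (Nat.cast_nonneg _) (pow_le_one₀ (by positivity) hdensity)
    · have hB'D : #(B' / B') ≤ D :=
        (Nat.cast_le.2 (card_le_card (div_subset_div hB'B hB'B))).trans hD
      have hB'S : η ^ (n + 1) * #(B' * S) ≤ #S := by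
        calc η ^ (n + 1) * #(B' * S) ≤ η ^ (n + 1) * (η * #(B * S)) := by gcongr
          _ = η ^ (n + 1 + 1) * #(B * S) := by ring
          _ ≤ #S := hBS
      have hcard' : θ / D * #B ^ 2 ≤ #B' := by
        calc θ / D * #B ^ 2 = θ * #B ^ 2 / D := div_mul_eq_mul_div ..
          _ ≤ θ * #B ^ 2 / #(B / B) := by gcongr
          _ ≤ #B' := hcard
      obtain ⟨A, hAB', hA, hlarge⟩ := ih hB' hB'D hB'S
      refine ⟨A, hAB'.trans hB'B, hA, le_trans ?_ hlarge⟩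
      exact mul_le_mul_of_nonneg_left
        (mul_pow_two_pow_sub_one_le (by positivity) hcard' n) (sub_nonneg.2 hθ₁)

lemma smul_mul_self_of_doubling_lt_three_halves (hA : #(A * A) < (3 / 2 : ℚ) * #A) {x : G}
    (hx : x ∈ A / A) : x • (A * A) = A * A := by
  have hxH : x ∈ invMulSubgroup A hA := by
    rwa [← SetLike.mem_coe, invMulSubgroup_eq_mul_inv, ← coe_mul, mem_coe, ← div_eq_mul_inv]
  have hH : x • (A⁻¹ * A) = A⁻¹ * A := by
    rw [← coe_inj, coe_smul_finset, coe_mul, ← invMulSubgroup_eq_inv_mul A hA]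
    exact smul_coe_set hxH
  obtain ⟨a, ha, -⟩ := mem_div.1 hx
  rw [← smul_inv_mul_opSMul_eq_mul_of_doubling_lt_three_halves hA ha, smul_comm a,
    smul_inv_mul_eq_inv_mul_opSMul hA ha, smul_comm x, smul_comm x, hH]

lemma card_le_card_mulSymmSet_of_doubling_lt_three_halves
    (hA : #(A * A) < (3 / 2 : ℝ) * #A) (hη₀ : 0 < η) (hη₁ : η ≤ 1) :
    #A ≤ #(mulSymmSet (A * A) η) := by
  have hne : A.Nonempty := nonempty_iff_ne_empty.2 (by rintro rfl; simp at hA)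
  have hA' : #(A * A) < (3 / 2 : ℚ) * #A := by
    rw [← Rat.cast_lt (K := ℝ)]
    push_cast
    exact hA
  refine (card_le_card_div_right hne).trans (card_le_card fun x hx ↦ ?_)
  rw [mem_mulSymmSet hη₀ (hne.mul hne), smul_mul_self_of_doubling_lt_three_halves hA' hx,
    inter_self]
  exact mul_le_of_le_one_left (Nat.cast_nonneg _) hη₁

lemma card_div_self_le_sq_mul_card (hAK : #(A * A) ≤ K * #A) : #(A / A) ≤ K ^ 2 * #A := by
  obtain rfl | hA := A.eq_empty_or_nonempty
  · simp
  have hA₀ : (0 : ℝ) < #A := mod_cast hA.card_pos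
  refine le_of_mul_le_mul_right ?_ hA₀
  calc (#(A / A) * #A : ℝ) ≤ #(A * A) * #(A * A) :=
        mod_cast ruzsa_triangle_inequality_div_mul_mul A A A
    _ ≤ (K * #A) * (K * #A) := mul_self_le_mul_self (Nat.cast_nonneg _) hAK
    _ = K ^ 2 * #A * #A := by ring

lemma one_le_of_card_mul_self_le (hA : A.Nonempty) (hAK : #(A * A) ≤ K * #A) : 1 ≤ K := by
  have hA₀ : (0 : ℝ) < #A := mod_cast hA.card_pos
  have hcard : (#A : ℝ) ≤ #(A * A) := mod_cast card_le_card_mul_self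
  exact le_of_mul_le_mul_right (by linarith) hA₀

end SymmetrySets

open Finset in
theorem large_symmetry_set_from_small_doubling_general {G : Type*} [Group G] [DecidableEq G]
    {A : Finset G} {K η : ℝ} (hA : A.Nonempty) (hAK : #(A * A) ≤ K * #A) (hη₀ : 0 < η)
    (hη₁ : η < 1) :
    ∃ A' ⊆ A, A'.Nonempty ∧
      Real.exp (-(K ^ (Real.log 8 / Real.log (1 / η)) * Real.log K)) * #A ≤
        #(mulSymmSet (A' * A) η) := by
  have hA₀ : (0 : ℝ) < #A := mod_cast hA.card_pos
  have hK₁ : 1 ≤ K := one_le_of_card_mul_self_le hA hAK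
  obtain hK | hK := lt_or_ge K (3 / 2)
  · have hlarge := card_le_card_mulSymmSet_of_doubling_lt_three_halves
      (hAK.trans_lt (by gcongr)) hη₀ hη₁.le
    refine ⟨A, Subset.rfl, hA, le_trans ?_ (Nat.cast_le.2 hlarge)⟩
    refine mul_le_of_le_one_left hA₀.le (Real.exp_le_one_iff.2 (neg_nonpos.2 ?_))
    exact mul_nonneg (by positivity) (Real.log_nonneg hK₁)
  set y := Real.log K / Real.log (1 / η)
  have hy : 0 ≤ y := div_nonneg (Real.log_nonneg hK₁) (Real.log_pos (one_lt_one_div hη₀ hη₁)).le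
  have hAA : η ^ (⌊y⌋₊ + 1) * #(A * A) ≤ #A := by
    calc η ^ (⌊y⌋₊ + 1) * #(A * A) ≤ η ^ (⌊y⌋₊ + 1) * (K * #A) := by gcongr
      _ = η ^ (⌊y⌋₊ + 1) * K * #A := by ring
      _ ≤ #A := mul_le_of_le_one_left hA₀.le <| pow_mul_le_one_of_log_div_le (by linarith) hη₀ hη₁
        (mod_cast (Nat.lt_floor_add_one y).le)
  -- For `θ = 1 / 3` a single step costs the factor `1 - θ = 2 / 3`, which is at least `1 / K`
  -- exactly when the doubling bound `K` is at least `3 / 2`.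
  obtain ⟨A', hA'A, hA', hlarge⟩ := exists_subset_le_card_mulSymmSet (θ := 1 / 3) hA (by norm_num)
    (by norm_num) hη₀ ⌊y⌋₊ hA (card_div_self_le_sq_mul_card hAK) hAA
  refine ⟨A', hA'A, hA', le_trans ?_ hlarge⟩
  have hdensity : 1 / 3 / (K ^ 2 * #A) * #A = 1 / (3 * K ^ 2) := by field_simp
  rw [hdensity, mul_left_comm, mul_comm, show (1 : ℝ) - 1 / 3 = 2 / 3 by norm_num]
  gcongr
  exact exp_neg_rpow_mul_log_le hK (Nat.floor_le hy)

theorem large_symmetry_set_from_small_doubling :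
    ∃ C : ℝ, 0 < C ∧
      ∀ (G : Type) [AddCommGroup G] [DecidableEq G] (A : Finset G) (K ε : ℝ),
        A.Nonempty → 1 ≤ K → ((A + A).card : ℝ) ≤ K * A.card → 0 < ε → ε < 1 →
        ∃ A' : Finset G, A' ⊆ A ∧ A'.Nonempty ∧
          Real.exp (-(K ^ (C / Real.log (1 / (1 - ε))) * Real.log K)) * A.card ≤
            ((symmSet (A' + A) (1 - ε)).card : ℝ) :=
  -- The pointwise operations on `Finset (Multiplicative G)` unfold to those on `Finset G`, so that
  -- `mulSymmSet` in `Multiplicative G` is definitionally `symmSet` in `G`.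
  ⟨Real.log 8, Real.log_pos (by norm_num), fun G _ _ _ _ _ hA _ hAK hε₀ hε₁ ↦
    large_symmetry_set_from_small_doubling_general (G := Multiplicative G) hA hAK (sub_pos.2 hε₁)
      (sub_lt_self 1 hε₀)⟩
end
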